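/- arXiv:2207.14550 — 10 statements merged into one kernel-verified Lean document; each statement's English description precedes it below -/
import Mathlib

section
/- Let k, d be positive integers, let Σ be a type, let Φ : Fin k → Fin d → Σ be a feedback matrix, let L : Fin k → Fin d → ℝ be a loss matrix, and let Π be a finite nonempty set of actions (a subset of Fin k). Suppose there is a graph on Π that is connected, and for every edge {a,b} of this graph there is a function w_{ab} : Fin k → Σ → ℝ with w_{ba} = −w_{ab} such that for all outcomes x ∈ Fin d, ∑_{c ∈ Fin k} w_{ab}(c, Φ(c,x)) = L(a,x) − L(b,x). Then there exists a function G : Fin k → Σ → (Π → ℝ) such that for all b, c ∈ Π and all x ∈ Fin d, ∑_{a ∈ Fin k} ( G(a, Φ(a,x))(b) − G(a, Φ(a,x))(c) ) = L(b,x) − L(c,x). -/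
/-!
Fix a root action `r`. Along any walk from `b` to `r` the edge functions `w` telescope to a
function estimating `L b - L r` (`exists_estimator_of_walk`). Connectivity supplies such a walk for
every `b`, and the root's loss cancels in the difference of the estimators of `b` and `c`.
-/

theorem exists_estimator_of_walk {k d : ℕ} {S V : Type*} (Φ : Fin k → Fin d → S)
    (ℓ : V → Fin d → ℝ) (Gr : SimpleGraph V) (w : V → V → Fin k → S → ℝ)
    (hobs : ∀ a b, Gr.Adj a b → ∀ x : Fin d, ∑ c : Fin k, w a b c (Φ c x) = ℓ a x - ℓ b x)
    {b r : V} (p : Gr.Walk b r) :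
    ∃ g : Fin k → S → ℝ, ∀ x : Fin d, ∑ c : Fin k, g c (Φ c x) = ℓ b x - ℓ r x := by
  induction p with
  | nil => exact ⟨fun _ _ => 0, fun x => by simp⟩
  | @cons u v _ h _ ih =>
    obtain ⟨g, hg⟩ := ih
    refine ⟨fun c σ => w u v c σ + g c σ, fun x => ?_⟩
    rw [Finset.sum_add_distrib, hobs u v h x, hg x]
    ring

/-- Lemma 1 of the paper (loss difference estimation in globally observable games):
if a connected graph on the set P of (Pareto optimal) actions admits, for each of its
edges {a,b}, a function w_{ab} : [k] × Σ → ℝ with w_{ba} = −w_{ab} and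
∑_c w_{ab}(c, Φ(c,x)) = L(a,x) − L(b,x) for all outcomes x, then there is a single
function G : [k] × Σ → (P → ℝ) with
∑_a (G(a, Φ(a,x))_b − G(a, Φ(a,x))_c) = L(b,x) − L(c,x) for all b, c ∈ P and all x. -/
theorem stmt_0 (k d : ℕ) (hk : 0 < k) (hd : 0 < d) (S : Type*)
    (Φ : Fin k → Fin d → S) (L : Fin k → Fin d → ℝ)
    (P : Finset (Fin k)) (hP : P.Nonempty)
    (Gr : SimpleGraph {a // a ∈ P}) (hconn : Gr.Connected)
    (w : {a // a ∈ P} → {a // a ∈ P} → Fin k → S → ℝ)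
    (hskew : ∀ a b, Gr.Adj a b → ∀ c σ, w b a c σ = - w a b c σ)
    (hobs : ∀ a b, Gr.Adj a b → ∀ x : Fin d,
      ∑ c : Fin k, w a b c (Φ c x) = L a.1 x - L b.1 x) :
    ∃ G : Fin k → S → ({a // a ∈ P} → ℝ),
      ∀ (b c : {a // a ∈ P}) (x : Fin d),
        ∑ a : Fin k, (G a (Φ a x) b - G a (Φ a x) c) = L b.1 x - L c.1 x := by
  obtain ⟨r⟩ := hconn.nonempty
  choose g hg using fun b => exists_estimator_of_walk Φ (fun a => L a.1) Gr w hobs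
    (hconn.preconnected b r).some
  refine ⟨fun a σ b => g b a σ, fun b c x => ?_⟩
  rw [Finset.sum_sub_distrib, hg b x, hg c x]
  ring
end

section
/- Consider a partial monitoring game G = (L, Φ) with k actions and d outcomes, loss matrix L ∈ [0,1]^{k×d} with rows ℓ_a, and feedback matrix Φ ∈ Σ^{k×d}. Assume the game is non-degenerate, has no duplicate actions, and is locally observable. Let m be the maximum over actions a of the number of distinct feedback symbols in row a of Φ, and let Π be the set of Pareto optimal actions. For q in the probability simplex 𝒫_k, let 𝒫'_k(q) = { p ∈ 𝒫_k : p_a ≥ q_a/(2k) for all a }, let ℋ = { G : [k] × Σ → ℝ^k }, let ξ(x) = exp(−x) + x − 1 (applied coordinatewise to vectors), let bias_q(G; x) = ⟨q, L e_x − ∑_{a=1}^k G(a, Φ_{ax})⟩ + max_{c ∈ Π} ( ∑_{a=1}^k G(a, Φ_{ax})_c − L_{cx} ), and let opt'_q(η) be the infimum over G ∈ ℋ and p ∈ 𝒫'_k(q) of max_{x ∈ [d]} [ (p−q)ᵀ L e_x / η + bias_q(G; x)/η + (1/η²) ∑_{a=1}^k p_a ⟨q, ξ(η G(a, Φ_{ax})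 / p_a)⟩ ]. Then for every η with 0 < η ≤ 1/(2 m k²), sup_{q ∈ 𝒫_k} opt'_q(η) ≤ 3 m² k³. -/
/-!
The objective is, for each outcome `x`, jointly convex in `(p, G)` as long as `p > 0`, since
`p ξ(η g / p)` is a perspective function. A finite-dimensional minimax argument
(`exists_forall_lt_of_convex`) therefore allows `(p, G)` to be chosen after a distribution `lam` over
outcomes, with the objective averaged over `lam`.

For fixed `lam`, the geometry of the cells gives a root `r` such that every other Pareto optimal
action can step to a neighbor, without increasing the expected loss under `lam`, and reach `r` after
finitely many steps (`exists_descent`). Local observability provides, for each step, an estimator of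
the loss difference supported on its two endpoints, and it can be taken bounded by `m`
(`exists_bounded_edge`). Summing along the path from `c` to `r` estimates `ℓ_c - ℓ_r` exactly, with
values at most `2 m`, using only the actions on the path (`exists_path_estimator`).

Now let `p` spread the mass of each `q c` evenly over the path of `c`, mixed with uniform exploration
at rate `γ ≈ 2 m k η`. As losses decrease along paths, the linear term costs at most `γ / η ≤ 2 m k`;
the bias is nonpositive; and since `p a` is at least `1 / (2 k)` times the mass of all `c` whose path
visits `a`, the bound `ξ(y) ≤ y²` for `|y| ≤ 1` makes the last term at most `8 m² k² + 1`. The sum is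
at most `3 m² k³` when `k ≥ 3`; for `k ≤ 2` the paths have at most one edge and the estimators are
correspondingly smaller. Dominated actions, whose losses need not be observable, keep their mass and get the trivial estimate
`G a σ c = p a`, which sums to `1` over `a` and so never underestimates a loss
(`exists_feasible_le`).
-/

open Finset

noncomputable section

/-- The probability simplex 𝒫_n ⊆ ℝ^n. -/
def probSimplex (n : ℕ) : Set (Fin n → ℝ) :=
  {u | (∀ i, 0 ≤ u i) ∧ ∑ i, u i = 1}

/-- The cell 𝒞_a of action a: distributions over outcomes for which a is optimal. -/
def cell {k d : ℕ} (L : Fin k → Fin d → ℝ) (a : Fin k) : Set (Fin d → ℝ) :=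
  {u ∈ probSimplex d | ∀ b : Fin k, ∑ x, (L a x - L b x) * u x ≤ 0}

/-- The dimension of the affine hull of a set S ⊆ ℝ^d. -/
def affineDim (d : ℕ) (S : Set (Fin d → ℝ)) : ℕ :=
  Module.finrank ℝ (affineSpan ℝ S).direction

/-- Action a is Pareto optimal: its cell is nonempty of affine dimension d − 1. -/
def Pareto {k d : ℕ} (L : Fin k → Fin d → ℝ) (a : Fin k) : Prop :=
  (cell L a).Nonempty ∧ affineDim d (cell L a) = d - 1

/-- The game is non-degenerate: every non-dominated action is Pareto optimal. -/
def NonDegenerate {k d : ℕ} (L : Fin k → Fin d → ℝ) : Prop :=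
  ∀ a : Fin k, (cell L a).Nonempty → affineDim d (cell L a) = d - 1

/-- The game has no duplicate actions: no two rows of L coincide. -/
def NoDuplicateActions {k d : ℕ} (L : Fin k → Fin d → ℝ) : Prop :=
  ∀ a b : Fin k, (∀ x, L a x = L b x) → a = b

/-- Pareto optimal actions a and b are neighbors: dim(𝒞_a ∩ 𝒞_b) = d − 2. -/
def Neighbors {k d : ℕ} (L : Fin k → Fin d → ℝ) (a b : Fin k) : Prop :=
  Pareto L a ∧ Pareto L b ∧ affineDim d (cell L a ∩ cell L b) = d - 2

/-- Local observability: every pair of neighboring actions a, b admits an estimation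
function w supported on {a,b} with ∑_c w(c, Φ_{cx}) = L_{ax} − L_{bx} for all x. -/
def LocallyObservable {k d : ℕ} {S : Type*}
    (L : Fin k → Fin d → ℝ) (Φ : Fin k → Fin d → S) : Prop :=
  ∀ a b : Fin k, Neighbors L a b →
    ∃ w : Fin k → S → ℝ,
      (∀ c σ, c ≠ a → c ≠ b → w c σ = 0) ∧
        ∀ x, ∑ c, w c (Φ c x) = L a x - L b x

/-- ξ(x) = exp(−x) + x − 1. -/
def xi (x : ℝ) : ℝ := Real.exp (-x) + x - 1

/-- The bias function bias_q(G; x) of a loss estimator G at outcome x. -/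
def biasFn {k d : ℕ} {S : Type*} (L : Fin k → Fin d → ℝ) (Φ : Fin k → Fin d → S)
    (q : Fin k → ℝ) (G : Fin k → S → Fin k → ℝ) (x : Fin d) : ℝ :=
  (∑ b, q b * (L b x - ∑ a, G a (Φ a x) b)) +
    sSup ((fun c => (∑ a, G a (Φ a x) c) - L c x) '' {c : Fin k | Pareto L c})

/-- The objective of the exploration-by-optimization problem, maximized over
outcomes x. -/
def ebOObjective {k d : ℕ} {S : Type*} (L : Fin k → Fin d → ℝ)
    (Φ : Fin k → Fin d → S) (η : ℝ) (q p : Fin k → ℝ)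
    (G : Fin k → S → Fin k → ℝ) : ℝ :=
  ⨆ x : Fin d,
    ((∑ a, (p a - q a) * L a x) / η + biasFn L Φ q G x / η +
      (1 / η ^ 2) * ∑ a, p a * ∑ b, q b * xi (η * G a (Φ a x) b / p a))

/-- opt'_q(η): the optimal value of exploration by optimization over the
restricted feasible set 𝒫'_k(q) = {p ∈ 𝒫_k : p_a ≥ q_a/(2k)}. -/
def optValue {k d : ℕ} {S : Type*} (L : Fin k → Fin d → ℝ)
    (Φ : Fin k → Fin d → S) (η : ℝ) (q : Fin k → ℝ) : ℝ :=
  sInf {v : ℝ | ∃ G : Fin k → S → Fin k → ℝ, ∃ p : Fin k → ℝ,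
    p ∈ probSimplex k ∧ (∀ a, q a / (2 * (k : ℝ)) ≤ p a) ∧
      v = ebOObjective L Φ η q p G}

/-! ### Cells and their dimensions -/

/-- The linear functional `u ↦ ∑ x, f x * u x`. -/
def pairing {d : ℕ} (f : Fin d → ℝ) : (Fin d → ℝ) →ₗ[ℝ] ℝ := ∑ x, f x • LinearMap.proj x

lemma pairing_apply {d : ℕ} (f u : Fin d → ℝ) : pairing f u = ∑ x, f x * u x := by
  simp [pairing]

lemma pairing_injective {d : ℕ} {f g : Fin d → ℝ} (h : pairing f = pairing g) : f = g := by
  funext x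
  have := congrArg (fun φ => φ (Pi.single x 1)) h
  simpa [pairing_apply, Pi.single_apply] using this

/-- A nonempty subset of the hyperplane `∑ u = 1` spans a linear space of dimension one more than
its affine dimension; this lets cells be handled as cones. -/
lemma finrank_span_eq {d : ℕ} {C : Set (Fin d → ℝ)} (hC : C ⊆ probSimplex d) (hne : C.Nonempty) :
    Module.finrank ℝ (Submodule.span ℝ C) = affineDim d C + 1 := by
  obtain ⟨p, hp⟩ := hne
  let φ : (Fin d → ℝ) →ₗ[ℝ] ℝ := pairing fun _ => 1
  have hφ : ∀ u ∈ C, φ u = 1 := by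
    intro u hu
    simpa [φ, pairing_apply] using (hC hu).2
  have hle : vectorSpan ℝ C ≤ LinearMap.ker φ := by
    rw [vectorSpan_def, Submodule.span_le]
    rintro _ ⟨u, hu, v, hv, rfl⟩
    simp [hφ u hu, hφ v hv]
  have hp0 : p ≠ 0 := by
    rintro rfl
    have := hφ 0 hp
    simp at this
  have hsup : Submodule.span ℝ C = vectorSpan ℝ C ⊔ Submodule.span ℝ {p} := by
    apply le_antisymm
    · rw [Submodule.span_le]
      intro s hs
      have h1 : s - p ∈ vectorSpan ℝ C := vsub_mem_vectorSpan ℝ hs hp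
      have h2 : p ∈ Submodule.span ℝ {p} := Submodule.mem_span_singleton_self p
      have := Submodule.add_mem_sup h1 h2
      simpa using this
    · apply sup_le
      · rw [vectorSpan_def, Submodule.span_le]
        rintro _ ⟨u, hu, v, hv, rfl⟩
        exact Submodule.sub_mem _ (Submodule.subset_span hu) (Submodule.subset_span hv)
      · exact Submodule.span_mono (by simpa using hp)
  have hinf : vectorSpan ℝ C ⊓ Submodule.span ℝ {p} = ⊥ := by
    rw [eq_bot_iff]
    rintro v ⟨hv1, hv2⟩
    obtain ⟨t, rfl⟩ := Submodule.mem_span_singleton.1 hv2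
    have := hle hv1
    simp [hφ p hp] at this
    simp [this]
  have := Submodule.finrank_sup_add_finrank_inf_eq (vectorSpan ℝ C) (Submodule.span ℝ {p})
  rw [← hsup, hinf, finrank_span_singleton hp0] at this
  rw [affineDim, direction_affineSpan]
  simpa using this

lemma exists_pos_of_span_eq_top {V ι : Type*} [AddCommGroup V] [Module ℝ V] [Fintype ι]
    (C : Set V) (hC : Submodule.span ℝ C = ⊤) (f : ι → V →ₗ[ℝ] ℝ)
    (hf : ∀ i, f i ≠ 0) (hnn : ∀ i, ∀ u ∈ C, 0 ≤ f i u) : ∃ u, ∀ i, 0 < f i u := by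
  have key : ∀ i, ∃ u ∈ C, 0 < f i u := by
    intro i
    by_contra! h
    apply hf i
    have : Submodule.span ℝ C ≤ LinearMap.ker (f i) := by
      rw [Submodule.span_le]
      intro u hu
      exact le_antisymm (h u hu) (hnn i u hu)
    rw [hC, top_le_iff, LinearMap.ker_eq_top] at this
    exact this
  choose c hc hpos using key
  refine ⟨∑ i, c i, fun j => ?_⟩
  rw [map_sum]
  exact Finset.sum_pos' (fun i _ => hnn j _ (hc i)) ⟨j, Finset.mem_univ _, hpos j⟩

/-- The cone over the cell of a Pareto optimal action has an interior point. -/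
lemma exists_interior {k d : ℕ} (hd : 0 < d) {L : Fin k → Fin d → ℝ}
    (hdup : NoDuplicateActions L) {a : Fin k} (ha : Pareto L a) :
    ∃ u : Fin d → ℝ, (∀ x, 0 < u x) ∧ ∀ b, b ≠ a → 0 < pairing (L b - L a) u := by
  have hsub : cell L a ⊆ probSimplex d := fun u hu => hu.1
  have hfr := finrank_span_eq hsub ha.1
  rw [ha.2] at hfr
  have htop : Submodule.span ℝ (cell L a) = ⊤ := by
    apply Submodule.eq_top_of_finrank_eq
    rw [hfr, Module.finrank_fin_fun]
    omega
  let f : Fin d ⊕ {b : Fin k // b ≠ a} → (Fin d → ℝ) →ₗ[ℝ] ℝ :=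
    Sum.elim (fun x => LinearMap.proj x) (fun b => pairing (L b.1 - L a))
  obtain ⟨u, hu⟩ := exists_pos_of_span_eq_top (cell L a) htop f
    (by
      rintro (x | ⟨b, hb⟩) h0
      · have := congrArg (fun φ => φ (Pi.single x 1)) h0
        simp [f] at this
      · apply hb
        apply hdup
        have h1 : pairing (L b - L a) = pairing 0 := by
          have h2 : pairing (0 : Fin d → ℝ) = 0 := by simp [pairing]
          rw [h2]; exact h0
        intro x
        have := congrFun (pairing_injective h1) x
        simp at this
        linarith)
    (by
      rintro (x | ⟨b, hb⟩) u hu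
      · exact hu.1.1 x
      · have := hu.2 b
        simp only [f, Sum.elim_inr, pairing_apply, Pi.sub_apply]
        have h2 : ∑ x, (L b x - L a x) * u x = - ∑ x, (L a x - L b x) * u x := by
          rw [← Finset.sum_neg_distrib]
          exact Finset.sum_congr rfl fun x _ => by ring
        linarith)
  exact ⟨u, fun x => hu (Sum.inl x), fun b hb => hu (Sum.inr ⟨b, hb⟩)⟩

/-- Points of the cone over a cell can be rescaled into the cell. -/
lemma exists_smul_mem_cell {k d : ℕ} (hd : 0 < d) {L : Fin k → Fin d → ℝ} {u : Fin d → ℝ}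
    (hu : ∀ x, 0 < u x) : ∃ t : ℝ, 0 < t ∧
      ∀ a, (∀ b, 0 ≤ pairing (L b - L a) u) → t • u ∈ cell L a := by
  have : Nonempty (Fin d) := ⟨⟨0, hd⟩⟩
  have hs : 0 < ∑ x, u x := Finset.sum_pos (fun x _ => hu x) Finset.univ_nonempty
  refine ⟨(∑ x, u x)⁻¹, inv_pos.2 hs, fun a h => ⟨⟨fun x => ?_, ?_⟩, fun b => ?_⟩⟩
  · have := hu x
    simp only [Pi.smul_apply, smul_eq_mul]
    positivity
  · simp only [Pi.smul_apply, smul_eq_mul]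
    rw [← Finset.mul_sum, inv_mul_cancel₀ hs.ne']
  · have h1 := h b
    have h2 : ∑ x, (L a x - L b x) * ((∑ x, u x)⁻¹ • u) x
        = - ((∑ x, u x)⁻¹ * pairing (L b - L a) u) := by
      rw [pairing_apply, Finset.mul_sum, ← Finset.sum_neg_distrib]
      exact Finset.sum_congr rfl fun x _ => by
        simp only [Pi.smul_apply, smul_eq_mul, Pi.sub_apply]; ring
    rw [h2]
    have := mul_nonneg (inv_pos.2 hs).le h1
    linarith

/-- If `ℓ_b - ℓ_a = (β / γ) (ℓ_c - ℓ_a)` with `0 < β < γ`, then `ℓ_b` lies strictly between `ℓ_a`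
and `ℓ_c`: wherever `b` is optimal it ties with both, so `b` is not Pareto optimal. -/
lemma not_pareto_of_between {k d : ℕ} (hd : 0 < d) {L : Fin k → Fin d → ℝ}
    (hdup : NoDuplicateActions L) {a b c : Fin k} (hab : a ≠ b) (hcb : c ≠ b) {β γ : ℝ}
    (hβ : 0 < β) (hβγ : β < γ)
    (h : ∀ u, γ * pairing (L b - L a) u = β * pairing (L c - L a) u) : ¬ Pareto L b := by
  intro hb
  obtain ⟨u, -, hu⟩ := exists_interior hd hdup hb
  have h1 := hu a hab
  have h2 := hu c hcb
  have h3 := h u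
  have e1 : pairing (L b - L a) u = - pairing (L a - L b) u := by
    simp only [pairing_apply, ← Finset.sum_neg_distrib]
    exact Finset.sum_congr rfl fun x _ => by simp only [Pi.sub_apply]; ring
  have e2 : pairing (L c - L a) u = pairing (L c - L b) u - pairing (L a - L b) u := by
    simp only [pairing_apply, ← Finset.sum_sub_distrib]
    exact Finset.sum_congr rfl fun x _ => by simp only [Pi.sub_apply]; ring
  rw [e1, e2] at h3
  nlinarith [mul_pos hβ h2]

/-- A solution of finitely many strict linear inequalities can be perturbed so as to avoid finitely
many given hyperplanes. -/
lemma exists_generic {V ι κ : Type*} [AddCommGroup V] [Module ℝ V] [Finite ι] [Finite κ]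
    (f : ι → V →ₗ[ℝ] ℝ) (h : κ → V →ₗ[ℝ] ℝ) (u : V) (hu : ∀ i, 0 < f i u) :
    ∃ u', (∀ i, 0 < f i u') ∧ ∀ j, h j ≠ 0 → h j u' ≠ 0 := by
  obtain ⟨v, hv⟩ : ∃ v, ∀ j, h j ≠ 0 → h j v ≠ 0 := by
    have h1 := Module.Dual.exists_forall_ne_zero_of_forall_exists
      (fun j : {j // h j ≠ 0} => h j.1)
      (by
        rintro ⟨j, hj⟩
        by_contra! h0
        exact hj (LinearMap.ext h0))
    obtain ⟨v, hv⟩ := h1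
    exact ⟨v, fun j hj => hv ⟨j, hj⟩⟩
  have ev1 : ∀ᶠ t : ℝ in nhdsWithin 0 (Set.Ioi 0), ∀ i, 0 < f i (u + t • v) := by
    rw [Filter.eventually_all]
    intro i
    have hc : Continuous fun t : ℝ => f i (u + t • v) := by
      simp only [map_add, map_smul, smul_eq_mul]
      fun_prop
    have : ∀ᶠ t : ℝ in nhds 0, 0 < f i (u + t • v) :=
      hc.continuousAt.eventually (lt_mem_nhds (by simpa using hu i))
    exact this.filter_mono nhdsWithin_le_nhds
  have ev2 : ∀ᶠ t : ℝ in nhdsWithin 0 (Set.Ioi 0), ∀ j, h j ≠ 0 → h j (u + t • v) ≠ 0 := by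
    rw [Filter.eventually_all]
    intro j
    by_cases hj : h j = 0
    · simp [hj]
    have hvj := hv j hj
    -- only `t = -h j u / h j v` is excluded
    by_cases h0 : h j u = 0
    · filter_upwards [self_mem_nhdsWithin] with t ht _
      have : t ≠ 0 := ne_of_gt ht
      simp [h0, this, hvj]
    · have hc : Continuous fun t : ℝ => h j (u + t • v) := by
        simp only [map_add, map_smul, smul_eq_mul]
        fun_prop
      have : ∀ᶠ t : ℝ in nhds 0, h j (u + t • v) ≠ 0 :=
        hc.continuousAt.eventually (isOpen_ne.mem_nhds (by simpa using h0))
      filter_upwards [nhdsWithin_le_nhds this] with t ht _ using ht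
  obtain ⟨t, h1, h2⟩ := (ev1.and ev2).exists
  exact ⟨_, h1, h2⟩

lemma pairing_sub_swap {d : ℕ} (f g u : Fin d → ℝ) :
    pairing (f - g) u = - pairing (g - f) u := by
  simp only [pairing_apply, ← Finset.sum_neg_distrib]
  exact Finset.sum_congr rfl fun x _ => by simp only [Pi.sub_apply]; ring

lemma pairing_sub_chain {d : ℕ} (f g h u : Fin d → ℝ) :
    pairing (f - h) u = pairing (f - g) u + pairing (g - h) u := by
  simp only [pairing_apply, ← Finset.sum_add_distrib]
  exact Finset.sum_congr rfl fun x _ => by simp only [Pi.sub_apply]; ring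

/-- If some point `w` of the open orthant is indifferent between `a` and `b` and strictly prefers
both to every other action, the cells of `a` and `b` meet in dimension `d - 2`. -/
lemma affineDim_inter {k d : ℕ} (hd : 0 < d) {L : Fin k → Fin d → ℝ}
    (hdup : NoDuplicateActions L) {a b : Fin k} (hab : b ≠ a) {w : Fin d → ℝ}
    (hw : ∀ x, 0 < w x) (hwb : pairing (L b - L a) w = 0)
    (hwc : ∀ c, c ≠ a → c ≠ b → 0 < pairing (L c - L a) w) :
    affineDim d (cell L a ∩ cell L b) = d - 2 := by
  -- positive points with the same strict preferences rescale into both cells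
  have hcone : ∀ u : Fin d → ℝ, (∀ x, 0 < u x) → pairing (L b - L a) u = 0 →
      (∀ c, c ≠ a → c ≠ b → 0 < pairing (L c - L a) u) →
      ∃ t : ℝ, 0 < t ∧ t • u ∈ cell L a ∩ cell L b := by
    intro u hu hub huc
    have hnn : ∀ c, 0 ≤ pairing (L c - L a) u := by
      intro c
      by_cases h1 : c = a
      · subst h1; simp [pairing_apply]
      by_cases h2 : c = b
      · subst h2; exact hub.ge
      exact (huc c h1 h2).le
    obtain ⟨t, ht, h⟩ := exists_smul_mem_cell (L := L) hd hu
    refine ⟨t, ht, h a hnn, h b fun c => ?_⟩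
    have h1 := pairing_sub_chain (L c) (L b) (L a) u
    have h2 := hnn c
    linarith
  obtain ⟨t, ht, htw⟩ := hcone w hw hwb hwc
  have hne : (cell L a ∩ cell L b).Nonempty := ⟨_, htw⟩
  have hsub : cell L a ∩ cell L b ⊆ probSimplex d := fun u hu => hu.1.1
  have hw_mem : w ∈ Submodule.span ℝ (cell L a ∩ cell L b) := by
    have := Submodule.smul_mem _ t⁻¹ (Submodule.subset_span (R := ℝ) htw)
    simpa [smul_smul, ht.ne'] using this
  have hspan : Submodule.span ℝ (cell L a ∩ cell L b) = LinearMap.ker (pairing (L b - L a)) := by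
    apply le_antisymm
    · rw [Submodule.span_le]
      rintro u ⟨h1, h2⟩
      have e1 := h1.2 b
      have e2 := h2.2 a
      have e3 : pairing (L a - L b) u ≤ 0 := by simpa [pairing_apply] using e1
      have e4 : pairing (L b - L a) u ≤ 0 := by simpa [pairing_apply] using e2
      have e5 := pairing_sub_swap (L a) (L b) u
      change pairing (L b - L a) u = 0
      linarith
    · intro v hv
      have hv : pairing (L b - L a) v = 0 := hv
      have ev : ∀ f : (Fin d → ℝ) →ₗ[ℝ] ℝ, 0 < f w →
          ∀ᶠ t : ℝ in nhdsWithin 0 (Set.Ioi 0), 0 < f (w + t • v) := by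
        intro f hf
        have hc : Continuous fun t : ℝ => f (w + t • v) := by
          simp only [map_add, map_smul, smul_eq_mul]
          fun_prop
        have : ∀ᶠ t : ℝ in nhds 0, 0 < f (w + t • v) :=
          hc.continuousAt.eventually (lt_mem_nhds (by simpa using hf))
        exact this.filter_mono nhdsWithin_le_nhds
      have ev1 : ∀ᶠ t : ℝ in nhdsWithin 0 (Set.Ioi 0), ∀ x, 0 < (w + t • v) x := by
        rw [Filter.eventually_all]
        exact fun x => ev (LinearMap.proj x) (hw x)
      have ev2 : ∀ᶠ t : ℝ in nhdsWithin 0 (Set.Ioi 0), ∀ c, c ≠ a → c ≠ b →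
          0 < pairing (L c - L a) (w + t • v) := by
        rw [Filter.eventually_all]
        intro c
        by_cases h1 : c = a
        · simp [h1]
        by_cases h2 : c = b
        · simp [h2]
        filter_upwards [ev _ (hwc c h1 h2)] with t ht _ _ using ht
      obtain ⟨ε, ⟨h1, h2⟩, h3⟩ := ((ev1.and ev2).and self_mem_nhdsWithin).exists
      have h3 : 0 < ε := h3
      obtain ⟨s, hs, hsw⟩ := hcone (w + ε • v) h1 (by simp [hwb, hv]) h2
      have h4 : w + ε • v ∈ Submodule.span ℝ (cell L a ∩ cell L b) := by
        have := Submodule.smul_mem _ s⁻¹ (Submodule.subset_span (R := ℝ) hsw)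
        rwa [smul_smul, inv_mul_cancel₀ hs.ne', one_smul] at this
      have h5 := Submodule.smul_mem _ ε⁻¹ (Submodule.sub_mem _ h4 hw_mem)
      rwa [add_sub_cancel_left, smul_smul, inv_mul_cancel₀ h3.ne', one_smul] at h5
  have hne0 : pairing (L b - L a) ≠ 0 := by
    intro h0
    apply hab
    apply hdup
    have h1 : pairing (L b - L a) = pairing 0 := by
      rw [h0]; simp [pairing]
    intro x
    have := congrFun (pairing_injective h1) x
    simp at this
    linarith
  have h1 := finrank_span_eq hsub hne
  have h2 := Module.Dual.finrank_ker_add_one_of_ne_zero hne0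
  rw [← hspan, h1, Module.finrank_fin_fun] at h2
  omega

/-! ### Descending through neighbors -/

/-- A Pareto optimal action `a` that is not optimal at `μ` has a neighbor that is strictly better
at `μ`: from a generic interior point of the cell of `a`, walk straight towards `μ`; the first cell
entered after leaving that of `a` belongs to such a neighbor. -/
lemma exists_better_neighbor {k d : ℕ} (hd : 0 < d) {L : Fin k → Fin d → ℝ}
    (hnd : NonDegenerate L) (hdup : NoDuplicateActions L) {a r : Fin k} (ha : Pareto L a)
    {μ : Fin d → ℝ} (hμ : ∀ x, 0 ≤ μ x) (hr : pairing (L r - L a) μ < 0) :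
    ∃ b, Neighbors L a b ∧ pairing (L b - L a) μ < 0 := by
  let g : Fin k → (Fin d → ℝ) →ₗ[ℝ] ℝ := fun b => pairing (L b - L a)
  have ga : g a = 0 := by simp [g, pairing]
  obtain ⟨u₁, hu₁, hu₁'⟩ := exists_interior hd hdup ha
  let f : Fin d ⊕ {b : Fin k // b ≠ a} → (Fin d → ℝ) →ₗ[ℝ] ℝ :=
    Sum.elim (fun x => LinearMap.proj x) (fun b => g b.1)
  -- `h (b, c)` vanishes at a starting point from which the hyperplanes of `b` and `c` are hit
  -- simultaneously
  let h : Fin k × Fin k → (Fin d → ℝ) →ₗ[ℝ] ℝ :=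
    fun bc => g bc.2 μ • g bc.1 - g bc.1 μ • g bc.2
  obtain ⟨u, hu, hgen⟩ := exists_generic f h u₁ (by
    rintro (x | ⟨b, hb⟩)
    · exact hu₁ x
    · exact hu₁' b hb)
  have hux : ∀ x, 0 < u x := fun x => hu (Sum.inl x)
  have hug : ∀ b, b ≠ a → 0 < g b u := fun b hb => hu (Sum.inr ⟨b, hb⟩)
  obtain ⟨b, hbB, hmin⟩ := Finset.exists_min_image
    (Finset.univ.filter fun b => g b μ < 0) (fun b => g b u / (- g b μ)) ⟨r, by simpa using hr⟩
  have hb : g b μ < 0 := by simpa using hbB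
  have hba : b ≠ a := by
    rintro rfl
    simp [ga] at hb
  -- the exit point, up to scaling
  let w : Fin d → ℝ := (- g b μ) • u + g b u • μ
  have hgw : ∀ c, g c w = (- g b μ) * g c u + g b u * g c μ := by
    intro c
    simp [w]
  have hwpos : ∀ x, 0 < w x := by
    intro x
    have h1 := mul_pos (neg_pos.2 hb) (hux x)
    have h2 := mul_nonneg (hug b hba).le (hμ x)
    simp only [w, Pi.add_apply, Pi.smul_apply, smul_eq_mul]
    linarith
  have hwb : g b w = 0 := by rw [hgw]; ring
  have hwnn : ∀ c, 0 ≤ g c w := by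
    intro c
    by_cases hca : c = a
    · rw [hca, ga]; simp
    have h1 := mul_pos (neg_pos.2 hb) (hug c hca)
    rw [hgw]
    by_cases hc : g c μ < 0
    · have h2 := hmin c (by simpa using hc)
      rw [div_le_div_iff₀ (neg_pos.2 hb) (neg_pos.2 hc)] at h2
      linarith
    · have h2 := mul_nonneg (hug b hba).le (not_lt.1 hc)
      linarith
  have hpar : ∀ c, g c w = 0 → Pareto L c := by
    intro c hc
    obtain ⟨t, ht, hcell⟩ := exists_smul_mem_cell (L := L) hd hwpos
    have hne : (cell L c).Nonempty := by
      refine ⟨_, hcell c fun e => ?_⟩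
      have h1 := pairing_sub_chain (L e) (L c) (L a) w
      have h2 := hwnn e
      simp only [g] at hc h2
      linarith
    exact ⟨hne, hnd c hne⟩
  have hwpos' : ∀ c, c ≠ a → c ≠ b → 0 < g c w := by
    intro c hca hcb
    refine lt_of_le_of_ne (hwnn c) fun h0 => ?_
    have h0 := h0.symm
    have h1 := hgw c
    have hcμ : g c μ < 0 := by
      by_contra hc
      have h2 := mul_nonneg (hug b hba).le (not_lt.1 hc)
      have h3 := mul_pos (neg_pos.2 hb) (hug c hca)
      linarith
    have hz : h (b, c) = 0 := by
      by_contra hz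
      apply hgen _ hz
      simp only [h, LinearMap.sub_apply, LinearMap.smul_apply, smul_eq_mul]
      linarith
    have hprop : ∀ v, (- g c μ) * g b v = (- g b μ) * g c v := by
      intro v
      have := congrArg (fun φ => φ v) hz
      simp only [h, LinearMap.sub_apply, LinearMap.smul_apply, smul_eq_mul,
        LinearMap.zero_apply] at this
      linarith
    rcases lt_trichotomy (- g b μ) (- g c μ) with hlt | heq | hgt
    · exact not_pareto_of_between hd hdup hba.symm hcb (neg_pos.2 hb) hlt hprop (hpar b hwb)
    · apply hcb
      have h2 : g c = g b := by
        refine LinearMap.ext fun v => ?_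
        have h3 := hprop
        rw [← heq] at h3
        exact (mul_left_cancel₀ (neg_pos.2 hb).ne' (h3 _)).symm
      have h4 := pairing_injective h2
      apply hdup
      intro x
      have := congrFun h4 x
      simpa using this
    · exact not_pareto_of_between hd hdup (Ne.symm hca) (Ne.symm hcb) (neg_pos.2 hcμ) hgt
        (fun v => (hprop v).symm) (hpar c h0)
  exact ⟨b, ⟨ha, hpar b hwb, affineDim_inter hd hdup hba hwpos hwb hwpos'⟩, hb⟩

/-- For every outcome distribution `lam` there are a Pareto optimal root `r` and a potential `φ`
such that from every other Pareto optimal action one can step to a neighbor of strictly smaller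
potential without increasing the expected loss under `lam`. The potential is the expected loss under
a small perturbation of `lam` at which `r` is the only optimal action. -/
lemma exists_descent {k d : ℕ} (hk : 0 < k) (hd : 0 < d) {L : Fin k → Fin d → ℝ}
    (hnd : NonDegenerate L) (hdup : NoDuplicateActions L)
    {lam : Fin d → ℝ} (hlam : lam ∈ probSimplex d) :
    ∃ (r : Fin k) (φ : Fin k → ℝ), Pareto L r ∧ ∀ c, Pareto L c → c ≠ r →
      ∃ b, Neighbors L c b ∧ φ b < φ c ∧ pairing (L b) lam ≤ pairing (L c) lam := by
  have psub : ∀ (f g u : Fin d → ℝ), pairing (f - g) u = pairing f u - pairing g u := by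
    intro f g u
    simp only [pairing_apply, ← Finset.sum_sub_distrib]
    exact Finset.sum_congr rfl fun x _ => by simp only [Pi.sub_apply]; ring
  have : Nonempty (Fin k) := ⟨⟨0, hk⟩⟩
  obtain ⟨r, hr⟩ := Finite.exists_min fun a => pairing (L a) lam
  have hrc : (cell L r).Nonempty := by
    refine ⟨lam, hlam, fun b => ?_⟩
    have h1 := psub (L r) (L b) lam
    rw [pairing_apply] at h1
    simp only [Pi.sub_apply] at h1
    rw [h1]
    linarith [hr b]
  have hrP : Pareto L r := ⟨hrc, hnd r hrc⟩
  obtain ⟨v, hv, hv'⟩ := exists_interior hd hdup hrP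
  have ev : ∀ᶠ t : ℝ in nhdsWithin 0 (Set.Ioi 0), ∀ b c, pairing (L c) lam < pairing (L b) lam →
      pairing (L c) (lam + t • v) < pairing (L b) (lam + t • v) := by
    rw [Filter.eventually_all]
    intro b
    rw [Filter.eventually_all]
    intro c
    by_cases hbc : pairing (L c) lam < pairing (L b) lam
    · have hc : Continuous fun t : ℝ =>
          pairing (L b) (lam + t • v) - pairing (L c) (lam + t • v) := by
        simp only [map_add, map_smul, smul_eq_mul]
        fun_prop
      have : ∀ᶠ t : ℝ in nhds 0, 0 < pairing (L b) (lam + t • v) - pairing (L c) (lam + t • v) :=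
        hc.continuousAt.eventually (lt_mem_nhds (by simpa using hbc))
      filter_upwards [nhdsWithin_le_nhds this] with t ht _
      linarith
    · simp [hbc]
  obtain ⟨ε, hε, hε0⟩ := (ev.and self_mem_nhdsWithin).exists
  have hε0 : 0 < ε := hε0
  refine ⟨r, fun a => pairing (L a) (lam + ε • v), hrP, fun c hc hcr => ?_⟩
  obtain ⟨b, hb, hlt⟩ := exists_better_neighbor (r := r) (μ := lam + ε • v) hd hnd hdup hc
    (fun x => by
      have h1 := hlam.1 x
      have h2 := mul_pos hε0 (hv x)
      simp only [Pi.add_apply, Pi.smul_apply, smul_eq_mul]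
      linarith)
    (by
      have h1 := mul_pos hε0 (hv' c hcr)
      have h2 := hr c
      rw [psub] at h1 ⊢
      simp only [map_add, map_smul, smul_eq_mul]
      linarith)
  rw [psub] at hlt
  refine ⟨b, hb, by linarith, ?_⟩
  by_contra hcon
  have := hε b c (not_le.1 hcon)
  linarith

/-! ### Bounded estimators -/

/-- A solution of `f (A x) + g (B x) = δ x` with `|δ| ≤ 1` can be replaced by one bounded by the
number of values of `A`. Join two values of `A` when they share a value of `B`: then `f` changes by
at most `2` along an edge, hence by at most `2 (m - 1)` on a connected component, and the solution
may be shifted by a constant on each component so as to center `f`. -/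
lemma exists_bounded_solution {S : Type*} {d m : ℕ} [DecidableEq S] (A B : Fin d → S)
    (δ : Fin d → ℝ) (hδ : ∀ x, |δ x| ≤ 1) (f g : S → ℝ) (hfg : ∀ x, f (A x) + g (B x) = δ x)
    (hm : (Finset.univ.image A).card ≤ m) :
    ∃ f' g' : S → ℝ, (∀ x, f' (A x) + g' (B x) = δ x) ∧ (∀ s, |f' s| ≤ m) ∧ ∀ s, |g' s| ≤ m := by
  classical
  let V := {s // s ∈ Finset.univ.image A}
  have : Fintype V := inferInstanceAs (Fintype {s // s ∈ Finset.univ.image A})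
  let Γ : SimpleGraph V := SimpleGraph.fromRel fun s t => ∃ x y, A x = s.1 ∧ A y = t.1 ∧ B x = B y
  have hstep : ∀ s t : V, Γ.Adj s t → |f s.1 - f t.1| ≤ 2 := by
    have aux : ∀ x y, B x = B y → |f (A x) - f (A y)| ≤ 2 := by
      intro x y hxy
      have h1 := hfg x
      have h2 := hfg y
      rw [hxy] at h1
      have h3 := abs_le.1 (hδ x)
      have h4 := abs_le.1 (hδ y)
      rw [abs_le]
      constructor <;> linarith
    intro s t hst
    rw [SimpleGraph.fromRel_adj] at hst
    rcases hst.2 with ⟨x, y, hx, hy, hxy⟩ | ⟨x, y, hx, hy, hxy⟩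
    · rw [← hx, ← hy]; exact aux x y hxy
    · rw [← hx, ← hy]; exact aux y x hxy.symm
  have hwalk : ∀ (s t : V) (p : Γ.Walk s t), |f s.1 - f t.1| ≤ 2 * p.length := by
    intro s t p
    induction p with
    | nil => simp
    | cons hadj p ih =>
      have h1 := hstep _ _ hadj
      rw [SimpleGraph.Walk.length_cons]
      push_cast
      rw [abs_le] at *
      constructor <;> linarith
  have hreach : ∀ s t : V, Γ.Reachable s t → |f s.1 - f t.1| ≤ 2 * ((m : ℝ) - 1) := by
    intro s t hst
    obtain ⟨p, hp⟩ := hst.exists_isPath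
    have h1 := hp.length_lt
    have h2 : Fintype.card V = (Finset.univ.image A).card := by
      rw [← Fintype.card_coe]
    have h3 : p.length + 1 ≤ m := by omega
    have h4 : (p.length : ℝ) + 1 ≤ m := by exact_mod_cast h3
    linarith [hwalk s t p]
  have hcenter : ∀ C : Γ.ConnectedComponent, ∃ z : ℝ, ∀ s : V,
      Γ.connectedComponentMk s = C → |f s.1 - z| ≤ (m : ℝ) - 1 := by
    intro C
    obtain ⟨s₀, hs₀⟩ := C.exists_rep
    let T := Finset.univ.filter fun s : V => Γ.connectedComponentMk s = C
    have hT : T.Nonempty := by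
      refine ⟨s₀, ?_⟩
      simp only [T, Finset.mem_filter, Finset.mem_univ, true_and]
      exact hs₀
    obtain ⟨s₁, h₁, hmax⟩ := T.exists_max_image (fun s => f s.1) hT
    obtain ⟨s₂, h₂, hmin⟩ := T.exists_min_image (fun s => f s.1) hT
    simp only [T, Finset.mem_filter, Finset.mem_univ, true_and] at h₁ h₂ hmax hmin
    have h12 := abs_le.1 (hreach s₁ s₂ (SimpleGraph.ConnectedComponent.exact (h₁.trans h₂.symm)))
    refine ⟨(f s₁.1 + f s₂.1) / 2, fun s hs => ?_⟩
    have e1 := hmax s hs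
    have e2 := hmin s hs
    rw [abs_le]
    constructor <;> linarith
  choose z hz using hcenter
  let v : Fin d → V := fun x => ⟨A x, Finset.mem_image_of_mem A (Finset.mem_univ x)⟩
  let c : Fin d → ℝ := fun x => z (Γ.connectedComponentMk (v x))
  have hcA : ∀ x y, A x = A y → c x = c y := by
    intro x y h
    have : v x = v y := Subtype.ext h
    simp only [c, this]
  have hcB : ∀ x y, B x = B y → c x = c y := by
    intro x y h
    by_cases hA : A x = A y
    · exact hcA x y hA
    have hadj : Γ.Adj (v x) (v y) := by
      rw [SimpleGraph.fromRel_adj]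
      exact ⟨fun e => hA (congrArg Subtype.val e), Or.inl ⟨x, y, rfl, rfl, h⟩⟩
    have := SimpleGraph.ConnectedComponent.sound hadj.reachable
    simp only [c]
    exact congrArg z this
  have hcf : ∀ x, |f (A x) - c x| ≤ (m : ℝ) - 1 := fun x => hz _ (v x) rfl
  let f' : S → ℝ := fun s => if h : ∃ x, A x = s then f s - c h.choose else 0
  let g' : S → ℝ := fun s => if h : ∃ x, B x = s then g s + c h.choose else 0
  have hf' : ∀ x, f' (A x) = f (A x) - c x := by
    intro x
    have h : ∃ y, A y = A x := ⟨x, rfl⟩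
    simp only [f', dif_pos h]
    rw [hcA _ _ h.choose_spec]
  have hg' : ∀ x, g' (B x) = g (B x) + c x := by
    intro x
    have h : ∃ y, B y = B x := ⟨x, rfl⟩
    simp only [g', dif_pos h]
    rw [hcB _ _ h.choose_spec]
  refine ⟨f', g', fun x => ?_, fun s => ?_, fun s => ?_⟩
  · rw [hf', hg', ← hfg x]; ring
  · by_cases h : ∃ x, A x = s
    · obtain ⟨x, rfl⟩ := h
      rw [hf']
      linarith [hcf x]
    · simp [f', dif_neg h]
  · by_cases h : ∃ x, B x = s
    · obtain ⟨x, rfl⟩ := h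
      rw [hg']
      have h1 := abs_le.1 (hcf x)
      have h2 := abs_le.1 (hδ x)
      have h3 := hfg x
      rw [abs_le]
      constructor <;> linarith
    · simp [g', dif_neg h]

/-- Neighboring actions admit an estimation function bounded by `m`. -/
lemma exists_bounded_edge {S : Type*} [DecidableEq S] {k d m : ℕ} {L : Fin k → Fin d → ℝ}
    {Φ : Fin k → Fin d → S} (hL : ∀ a x, L a x ∈ Set.Icc (0 : ℝ) 1)
    (hlo : LocallyObservable L Φ) (hm : ∀ a, (Finset.univ.image (Φ a)).card ≤ m)
    {a b : Fin k} (hab : a ≠ b) (hN : Neighbors L a b) :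
    ∃ w : Fin k → S → ℝ, (∀ c σ, c ≠ a → c ≠ b → w c σ = 0) ∧
      (∀ x, ∑ c, w c (Φ c x) = L a x - L b x) ∧ ∀ c σ, |w c σ| ≤ m := by
  obtain ⟨w, hw0, hw⟩ := hlo a b hN
  have hsum : ∀ w : Fin k → S → ℝ, (∀ c σ, c ≠ a → c ≠ b → w c σ = 0) →
      ∀ x, ∑ c, w c (Φ c x) = w a (Φ a x) + w b (Φ b x) := by
    intro w h x
    exact Fintype.sum_eq_add a b hab fun c hc => h c _ hc.1 hc.2
  obtain ⟨f, g, hfg, hf, hg⟩ := exists_bounded_solution (Φ a) (Φ b) (fun x => L a x - L b x)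
    (fun x => by
      have h1 := hL a x
      have h2 := hL b x
      rw [abs_le]
      constructor <;> linarith [h1.1, h1.2, h2.1, h2.2])
    (w a) (w b) (fun x => by rw [← hw x, hsum w hw0 x]) (hm a)
  let w' : Fin k → S → ℝ := fun c σ => if c = a then f σ else if c = b then g σ else 0
  have hw'0 : ∀ c σ, c ≠ a → c ≠ b → w' c σ = 0 := by
    intro c σ h1 h2
    simp [w', h1, h2]
  refine ⟨w', hw'0, fun x => ?_, fun c σ => ?_⟩
  · rw [hsum w' hw'0, ← hfg x]
    simp [w', hab.symm]
  · simp only [w']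
    split_ifs
    · exact hf σ
    · exact hg σ
    · simp

/-- Every Pareto optimal action `c` has an estimator `G` of the loss difference to the root,
supported on the actions of a path `P` from `c` to the root along which the expected loss under
`lam` is at most that of `c`. Each action of the path meets at most two of its edges, whence
the bound `2 m`; the sharper bounds for short paths serve games with at most two actions. -/
lemma exists_path_estimator {S : Type*} [DecidableEq S] {k d m : ℕ} {L : Fin k → Fin d → ℝ}
    {Φ : Fin k → Fin d → S} (hL : ∀ a x, L a x ∈ Set.Icc (0 : ℝ) 1)
    (hlo : LocallyObservable L Φ) (hm : ∀ a, (Finset.univ.image (Φ a)).card ≤ m)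
    {r : Fin k} {φ : Fin k → ℝ} {lam : Fin d → ℝ}
    (hdesc : ∀ c, Pareto L c → c ≠ r →
      ∃ b, Neighbors L c b ∧ φ b < φ c ∧ pairing (L b) lam ≤ pairing (L c) lam)
    (c : Fin k) (hc : Pareto L c) :
    ∃ (P : Finset (Fin k)) (G : Fin k → S → ℝ), c ∈ P ∧
      (∀ a ∈ P, φ a ≤ φ c ∧ pairing (L a) lam ≤ pairing (L c) lam) ∧
      (∀ x, ∑ a, G a (Φ a x) = L c x - L r x) ∧
      (∀ a σ, a ∉ P → G a σ = 0) ∧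
      (∀ σ, |G c σ| ≤ m) ∧ (∀ a σ, |G a σ| ≤ 2 * m) ∧
      (P.card ≤ 1 → ∀ a σ, G a σ = 0) ∧ (P.card ≤ 2 → ∀ a σ, |G a σ| ≤ m) := by
  classical
  have hwf : WellFounded fun a b : Fin k => φ a < φ b :=
    Finite.wellFounded_of_trans_of_irrefl _
  induction c using hwf.induction with
  | _ c ih =>
  by_cases hcr : c = r
  · subst hcr
    exact ⟨{c}, fun _ _ => 0, by simp, by simp, by simp, by simp, by simp, by simp, by simp,
      by simp⟩
  obtain ⟨b, hN, hφ, hle⟩ := hdesc c hc hcr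
  obtain ⟨P, G, hbP, hP, hsum, hsupp, hGb, hG, hG1, hG2⟩ := ih b hφ hN.2.1
  have hcb : c ≠ b := by rintro rfl; exact lt_irrefl _ hφ
  have hcP : c ∉ P := fun h => absurd (hP c h).1 (not_le.2 hφ)
  obtain ⟨w, hw0, hw, hwm⟩ := exists_bounded_edge hL hlo hm hcb hN
  have hcard : (insert c P).card = P.card + 1 := Finset.card_insert_of_notMem hcP
  have hPpos : 0 < P.card := Finset.card_pos.2 ⟨b, hbP⟩
  refine ⟨insert c P, fun a σ => w a σ + G a σ, Finset.mem_insert_self _ _, ?_, ?_, ?_, ?_, ?_,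
    ?_, ?_⟩
  · intro a ha
    rcases Finset.mem_insert.1 ha with rfl | ha
    · exact ⟨le_rfl, le_rfl⟩
    · exact ⟨((hP a ha).1.trans hφ.le), (hP a ha).2.trans hle⟩
  · intro x
    rw [Finset.sum_add_distrib, hw, hsum]
    ring
  · intro a σ ha
    rw [Finset.mem_insert, not_or] at ha
    have hab : a ≠ b := by rintro rfl; exact ha.2 hbP
    beta_reduce
    rw [hw0 a σ ha.1 hab, hsupp a σ ha.2, add_zero]
  · intro σ
    simp only [hsupp c σ hcP, add_zero]
    exact hwm c σ
  · intro a σ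
    beta_reduce
    by_cases hac : a = c
    · subst hac
      rw [hsupp a σ hcP, add_zero]
      have := hwm a σ
      have := (abs_nonneg _).trans this
      linarith
    by_cases hab : a = b
    · subst hab
      have h1 := hwm a σ
      have h2 := hGb σ
      have h3 := abs_add_le (w a σ) (G a σ)
      linarith
    · rw [hw0 a σ hac hab, zero_add]
      exact hG a σ
  · intro h
    omega
  · intro h a σ
    beta_reduce
    rw [hG1 (by omega) a σ, add_zero]
    exact hwm a σ

/-! ### Minimax and convexity of the objective -/

/-- Finite-dimensional minimax: if every convex combination of the convex functions `f i` takes a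
value at most `c` on `K`, then some point of `K` brings all of them below `c + ε`. -/
lemma exists_forall_lt_of_convex {E : Type*} [AddCommGroup E] [Module ℝ E] {d : ℕ} (hd : 0 < d)
    {K : Set E} (f : Fin d → E → ℝ) (hf : ∀ i, ConvexOn ℝ K (f i)) {c : ℝ}
    (h : ∀ lam ∈ probSimplex d, ∃ z ∈ K, ∑ i, lam i * f i z ≤ c) {ε : ℝ} (hε : 0 < ε) :
    ∃ z ∈ K, ∀ i, f i z < c + ε := by
  have : Nonempty (Fin d) := ⟨⟨0, hd⟩⟩
  let i₀ : Fin d := ⟨0, hd⟩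
  obtain ⟨z₀, hz₀, -⟩ := h (Pi.single i₀ 1) ⟨fun i => by
    by_cases hi : i = i₀ <;> simp [hi], by simp⟩
  let T : Set (Fin d → ℝ) := {v | ∃ z ∈ K, ∀ i, f i z < v i}
  have hTo : IsOpen T := by
    have : T = ⋃ z ∈ K, ⋂ i, {v : Fin d → ℝ | f i z < v i} := by
      ext v; simp [T]
    rw [this]
    exact isOpen_biUnion fun z _ => isOpen_iInter_of_finite fun i =>
      isOpen_lt continuous_const (continuous_apply i)
  have hTc : Convex ℝ T := by
    rintro v ⟨z, hz, hv⟩ v' ⟨z', hz', hv'⟩ s t hs ht hst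
    refine ⟨s • z + t • z', (hf i₀).1 hz hz' hs ht hst, fun i => ?_⟩
    have h1 := (hf i).2 hz hz' hs ht hst
    simp only [smul_eq_mul] at h1
    simp only [Pi.add_apply, Pi.smul_apply, smul_eq_mul]
    rcases hs.eq_or_lt with rfl | hs
    · have : t = 1 := by linarith
      subst this
      simp at h1 ⊢
      exact hv' i
    · have h2 := mul_lt_mul_of_pos_left (hv i) hs
      have h3 := mul_le_mul_of_nonneg_left (hv' i).le ht
      linarith
  by_contra hcon
  have hnot : (fun _ => c + ε : Fin d → ℝ) ∉ T := hcon
  obtain ⟨Λ, hΛ⟩ := geometric_hahn_banach_open_point hTc hTo hnot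
  have hΛe : ∀ v, Λ v = ∑ i, v i * Λ (Pi.single i 1) := by
    intro v
    conv_lhs => rw [pi_eq_sum_univ' v]
    rw [map_sum]
    refine Finset.sum_congr rfl fun i _ => ?_
    rw [map_smul, smul_eq_mul]
  have hv₀ : (fun i => f i z₀ + 1) ∈ T := ⟨z₀, hz₀, fun i => by linarith⟩
  let l : Fin d → ℝ := fun i => - Λ (Pi.single i 1)
  have hl : ∀ i, 0 ≤ l i := by
    intro i
    by_contra hneg
    have hpos : 0 < Λ (Pi.single i 1) := by
      simp only [l, not_le] at hneg
      linarith
    -- moving far enough in direction `i` stays in `T` but violates the separation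
    obtain ⟨n, hn⟩ := exists_nat_gt
      ((Λ (fun _ => c + ε) - Λ (fun i => f i z₀ + 1)) / Λ (Pi.single i 1))
    rw [div_lt_iff₀ hpos] at hn
    have hmem : (fun i => f i z₀ + 1) + (n : ℝ) • (Pi.single i 1 : Fin d → ℝ) ∈ T := by
      refine ⟨z₀, hz₀, fun j => ?_⟩
      have : 0 ≤ (n : ℝ) * (Pi.single i 1 : Fin d → ℝ) j := by
        by_cases hj : j = i <;> simp [hj]
      simp only [Pi.add_apply, Pi.smul_apply, smul_eq_mul]
      linarith
    have := hΛ _ hmem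
    rw [map_add, map_smul, smul_eq_mul] at this
    linarith
  have hs : 0 < ∑ i, l i := by
    refine lt_of_le_of_ne (Finset.sum_nonneg fun i _ => hl i) fun h0 => ?_
    have hz : ∀ i, l i = 0 := fun i =>
      (Finset.sum_eq_zero_iff_of_nonneg fun i _ => hl i).1 h0.symm i (Finset.mem_univ i)
    have hz' : ∀ i, Λ (Pi.single i 1) = 0 := fun i => by
      have := hz i
      simp only [l] at this
      linarith
    have := hΛ _ hv₀
    rw [hΛe, hΛe (fun _ => c + ε)] at this
    simp [hz'] at this
  obtain ⟨z, hz, hzc⟩ := h (fun i => l i / ∑ j, l j)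
    ⟨fun i => div_nonneg (hl i) hs.le, by rw [← Finset.sum_div, div_self hs.ne']⟩
  have h1 := hΛ (fun i => f i z + ε / 2) ⟨z, hz, fun i => by linarith⟩
  rw [hΛe, hΛe (fun _ => c + ε)] at h1
  have h2 : ∑ i, l i * f i z ≤ c * ∑ i, l i := by
    have : ∑ i, l i / (∑ j, l j) * f i z = (∑ i, l i * f i z) / ∑ j, l j := by
      rw [Finset.sum_div]
      exact Finset.sum_congr rfl fun i _ => by ring
    rw [this, div_le_iff₀ hs] at hzc
    exact hzc
  have h3 : ∑ i, (f i z + ε / 2) * Λ (Pi.single i 1)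
      = - (∑ i, l i * f i z) - ε / 2 * ∑ i, l i := by
    rw [Finset.mul_sum, ← Finset.sum_neg_distrib, ← Finset.sum_sub_distrib]
    exact Finset.sum_congr rfl fun i _ => by simp only [l]; ring
  have h4 : ∑ i, (c + ε) * Λ (Pi.single i 1) = - ((c + ε) * ∑ i, l i) := by
    rw [Finset.mul_sum, ← Finset.sum_neg_distrib]
    exact Finset.sum_congr rfl fun i _ => by simp only [l]; ring
  rw [h3, h4] at h1
  nlinarith [mul_pos hε hs]

/-- The exploration-by-optimization objective at a single outcome `x`, as a function of the pair
`(p, G)`. -/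
def objectiveAt {k d : ℕ} {S : Type*} (L : Fin k → Fin d → ℝ) (Φ : Fin k → Fin d → S) (η : ℝ)
    (q : Fin k → ℝ) (x : Fin d) (z : (Fin k → ℝ) × (Fin k → S → Fin k → ℝ)) : ℝ :=
  (∑ a, (z.1 a - q a) * L a x) / η + biasFn L Φ q z.2 x / η +
    (1 / η ^ 2) * ∑ a, z.1 a * ∑ b, q b * xi (η * z.2 a (Φ a x) b / z.1 a)

/-- The feasible pairs `(p, G)` with all `p a > 0`. Positivity is what makes the objective convex:
at `p a = 0` the division by zero replaces the true value `+∞` of the perspective of `ξ` by `0`. -/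
def feasible (k : ℕ) (S : Type*) (q : Fin k → ℝ) : Set ((Fin k → ℝ) × (Fin k → S → Fin k → ℝ)) :=
  {z | z.1 ∈ probSimplex k ∧ (∀ a, 0 < z.1 a) ∧ ∀ a, q a / (2 * (k : ℝ)) ≤ z.1 a}

lemma convex_feasible (k : ℕ) (S : Type*) (q : Fin k → ℝ) : Convex ℝ (feasible k S q) := by
  rintro z ⟨⟨h0, h1⟩, h2, h3⟩ z' ⟨⟨h0', h1'⟩, h2', h3'⟩ s t hs ht hst
  have hcomb : ∀ u v v' : ℝ, u ≤ v → u ≤ v' → u ≤ s * v + t * v' := by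
    intro u v v' h h'
    have e1 := mul_le_mul_of_nonneg_left h hs
    have e2 := mul_le_mul_of_nonneg_left h' ht
    have e3 : u = s * u + t * u := by rw [← add_mul, hst, one_mul]
    linarith
  refine ⟨⟨fun a => hcomb _ _ _ (h0 a) (h0' a), ?_⟩, fun a => ?_, fun a => hcomb _ _ _ (h3 a) (h3' a)⟩
  · simp only [Prod.fst_add, Prod.smul_fst, Pi.add_apply, Pi.smul_apply, smul_eq_mul]
    rw [Finset.sum_add_distrib, ← Finset.mul_sum, ← Finset.mul_sum, h1, h1']
    linarith
  · exact lt_of_lt_of_le (lt_min (h2 a) (h2' a)) (hcomb _ _ _ (min_le_left _ _) (min_le_right _ _))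

lemma convexOn_xi : ConvexOn ℝ Set.univ xi := by
  have h1 : ConvexOn ℝ Set.univ fun x : ℝ => Real.exp (-x) := by
    have := convexOn_exp.comp_linearMap (-LinearMap.id : ℝ →ₗ[ℝ] ℝ)
    simpa [Function.comp_def] using this
  have h2 : ConvexOn ℝ Set.univ fun x : ℝ => x - 1 := by
    refine ⟨convex_univ, fun x _ y _ s t _ _ hst => le_of_eq ?_⟩
    simp only [smul_eq_mul]
    linear_combination hst
  have := h1.add h2
  refine this.congr fun x _ => ?_
  simp [xi]; ring

lemma xi_le_sq {y : ℝ} (hy : |y| ≤ 1) : xi y ≤ y ^ 2 := by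
  have := Real.abs_exp_sub_one_sub_id_le (x := -y) (by simpa using hy)
  have := (abs_le.1 this).2
  simp only [xi]
  nlinarith

/-- Joint convexity of the perspective `(p, g) ↦ p ξ(η g / p)`. -/
lemma perspective_le {η p p' g g' s t : ℝ} (hp : 0 < p) (hp' : 0 < p') (hs : 0 ≤ s) (ht : 0 ≤ t)
    (hst : s + t = 1) :
    (s * p + t * p') * xi (η * (s * g + t * g') / (s * p + t * p')) ≤
      s * (p * xi (η * g / p)) + t * (p' * xi (η * g' / p')) := by
  have hP : 0 < s * p + t * p' := by
    rcases hs.eq_or_lt with rfl | hs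
    · have : t = 1 := by linarith
      subst this; linarith
    · have := mul_pos hs hp
      have := mul_nonneg ht hp'.le
      linarith
  have h := convexOn_xi.2 (Set.mem_univ (η * g / p)) (Set.mem_univ (η * g' / p'))
    (div_nonneg (mul_nonneg hs hp.le) hP.le) (div_nonneg (mul_nonneg ht hp'.le) hP.le)
    (by rw [← add_div, div_self hP.ne'])
  have e : (s * p / (s * p + t * p')) • (η * g / p) + (t * p' / (s * p + t * p')) • (η * g' / p')
      = η * (s * g + t * g') / (s * p + t * p') := by
    simp only [smul_eq_mul]
    field_simp
  rw [e] at h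
  have h2 := mul_le_mul_of_nonneg_left h hP.le
  refine h2.trans (le_of_eq ?_)
  simp only [smul_eq_mul]
  field_simp

lemma convexOn_objectiveAt {k d : ℕ} {S : Type*} {L : Fin k → Fin d → ℝ} {Φ : Fin k → Fin d → S}
    {η : ℝ} (hη : 0 < η) {q : Fin k → ℝ} (hq : ∀ a, 0 ≤ q a) (hP : ∃ r, Pareto L r) (x : Fin d) :
    ConvexOn ℝ (feasible k S q) (objectiveAt L Φ η q x) := by
  refine ⟨convex_feasible k S q, ?_⟩
  rintro ⟨p, G⟩ hz ⟨p', G'⟩ hz' s t hs ht hst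
  have hp : ∀ a, 0 < p a := hz.2.1
  have hp' : ∀ a, 0 < p' a := hz'.2.1
  have h1 : (∑ a, ((s * p a + t * p' a) - q a) * L a x) / η
      = s * ((∑ a, (p a - q a) * L a x) / η) + t * ((∑ a, (p' a - q a) * L a x) / η) := by
    rw [← mul_div_assoc, ← mul_div_assoc, ← add_div, Finset.mul_sum, Finset.mul_sum,
      ← Finset.sum_add_distrib]
    congr 1
    refine Finset.sum_congr rfl fun a _ => ?_
    have : q a = (s + t) * q a := by rw [hst, one_mul]
    linear_combination (-L a x) * this
  have h2 : biasFn L Φ q (s • G + t • G') x ≤ s * biasFn L Φ q G x + t * biasFn L Φ q G' x := by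
    have hsum : ∀ b, ∑ a, (s • G + t • G') a (Φ a x) b
        = s * ∑ a, G a (Φ a x) b + t * ∑ a, G' a (Φ a x) b := by
      intro b
      rw [Finset.mul_sum, Finset.mul_sum, ← Finset.sum_add_distrib]
      rfl
    have e1 : ∑ b, q b * (L b x - ∑ a, (s • G + t • G') a (Φ a x) b)
        = s * (∑ b, q b * (L b x - ∑ a, G a (Φ a x) b))
          + t * (∑ b, q b * (L b x - ∑ a, G' a (Φ a x) b)) := by
      rw [Finset.mul_sum, Finset.mul_sum, ← Finset.sum_add_distrib]
      refine Finset.sum_congr rfl fun b _ => ?_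
      rw [hsum]
      have : L b x = (s + t) * L b x := by rw [hst, one_mul]
      linear_combination q b * this
    have hbdd : ∀ F : Fin k → ℝ, BddAbove (F '' {c : Fin k | Pareto L c}) :=
      fun F => (Set.toFinite _).bddAbove
    have e2 : sSup ((fun c => (∑ a, (s • G + t • G') a (Φ a x) c) - L c x) '' {c | Pareto L c})
        ≤ s * sSup ((fun c => (∑ a, G a (Φ a x) c) - L c x) '' {c | Pareto L c})
          + t * sSup ((fun c => (∑ a, G' a (Φ a x) c) - L c x) '' {c | Pareto L c}) := by
      obtain ⟨r, hr⟩ := hP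
      apply csSup_le (Set.Nonempty.image _ ⟨r, hr⟩)
      rintro _ ⟨c, hc, rfl⟩
      have f1 := le_csSup (hbdd fun c => (∑ a, G a (Φ a x) c) - L c x) (Set.mem_image_of_mem _ hc)
      have f2 := le_csSup (hbdd fun c => (∑ a, G' a (Φ a x) c) - L c x) (Set.mem_image_of_mem _ hc)
      have f3 := mul_le_mul_of_nonneg_left f1 hs
      have f4 := mul_le_mul_of_nonneg_left f2 ht
      beta_reduce at f3 f4 ⊢
      rw [hsum]
      have : L c x = (s + t) * L c x := by rw [hst, one_mul]
      linarith
    simp only [biasFn]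
    rw [e1]
    linarith
  have h3 : ∑ a, (s * p a + t * p' a) *
      ∑ b, q b * xi (η * (s • G + t • G') a (Φ a x) b / (s * p a + t * p' a))
      ≤ s * (∑ a, p a * ∑ b, q b * xi (η * G a (Φ a x) b / p a))
        + t * (∑ a, p' a * ∑ b, q b * xi (η * G' a (Φ a x) b / p' a)) := by
    rw [Finset.mul_sum, Finset.mul_sum, ← Finset.sum_add_distrib]
    refine Finset.sum_le_sum fun a _ => ?_
    simp only [Finset.mul_sum]
    rw [← Finset.sum_add_distrib]
    refine Finset.sum_le_sum fun b _ => ?_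
    have := mul_le_mul_of_nonneg_left (perspective_le (η := η) (g := G a (Φ a x) b)
      (g' := G' a (Φ a x) b) (hp a) (hp' a) hs ht hst) (hq b)
    simp only [Pi.add_apply, Pi.smul_apply, smul_eq_mul]
    linarith
  change (∑ a, ((s * p a + t * p' a) - q a) * L a x) / η + biasFn L Φ q (s • G + t • G') x / η +
    (1 / η ^ 2) * ∑ a, (s * p a + t * p' a) *
      ∑ b, q b * xi (η * (s • G + t • G') a (Φ a x) b / (s * p a + t * p' a)) ≤
    s * ((∑ a, (p a - q a) * L a x) / η + biasFn L Φ q G x / η +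
      (1 / η ^ 2) * ∑ a, p a * ∑ b, q b * xi (η * G a (Φ a x) b / p a)) +
    t * ((∑ a, (p' a - q a) * L a x) / η + biasFn L Φ q G' x / η +
      (1 / η ^ 2) * ∑ a, p' a * ∑ b, q b * xi (η * G' a (Φ a x) b / p' a))
  have h2' := div_le_div_of_nonneg_right h2 hη.le
  have h3' := mul_le_mul_of_nonneg_left h3 (by positivity : 0 ≤ 1 / η ^ 2)
  rw [add_div, mul_div_assoc, mul_div_assoc] at h2'
  rw [h1]
  linarith

/-! ### The value for a fixed outcome distribution -/

/-- For every outcome distribution `lam` some feasible pair keeps the expected objective below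
`3 m² k³`. With `P c` a path from `c` to the root (`P c = {c}` when `c` is dominated), `p` spreads
the mass `q c` evenly over `P c` and then mixes in a little uniform exploration; `G` is the path
estimator on Pareto optimal actions, while for a dominated action `c` the estimate `G a σ c = p a`
overestimates its loss by the constant `1`. -/
lemma exists_feasible_le {S : Type*} [DecidableEq S] {k d m : ℕ} (hk : 0 < k) (hd : 0 < d)
    {L : Fin k → Fin d → ℝ} {Φ : Fin k → Fin d → S}
    (hL : ∀ a x, L a x ∈ Set.Icc (0 : ℝ) 1)
    (hnd : NonDegenerate L) (hdup : NoDuplicateActions L) (hlo : LocallyObservable L Φ)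
    (hm : ∀ a, (Finset.univ.image (Φ a)).card ≤ m) (hm1 : 1 ≤ m)
    {η : ℝ} (hη0 : 0 < η) (hη : η ≤ 1 / (2 * (m : ℝ) * (k : ℝ) ^ 2))
    {q : Fin k → ℝ} (hq : q ∈ probSimplex k) {lam : Fin d → ℝ} (hlam : lam ∈ probSimplex d) :
    ∃ z ∈ feasible k S q, ∑ x, lam x * objectiveAt L Φ η q x z
      ≤ 3 * (m : ℝ) ^ 2 * (k : ℝ) ^ 3 := by
  classical
  have hk1 : (1 : ℝ) ≤ k := by exact_mod_cast hk
  have hk0 : (0 : ℝ) < k := by linarith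
  have hm1' : (1 : ℝ) ≤ m := by exact_mod_cast hm1
  have hm0 : (0 : ℝ) < m := by linarith
  have hη' : 2 * m * k ^ 2 * η ≤ 1 := by
    rw [le_div_iff₀ (by positivity)] at hη
    linarith
  have hη1 : η ≤ 1 := by
    have : 1 ≤ 2 * (m : ℝ) * k ^ 2 := by nlinarith [mul_le_mul hm1' hk1 zero_le_one hm0.le]
    nlinarith
  obtain ⟨r, φ, hr, hdesc⟩ := exists_descent hk hd hnd hdup hlam
  -- `B` counts how many edges of a path can meet at an action
  obtain ⟨B, hB0, hB1, hB2, hBk⟩ : ∃ B : ℝ, 0 ≤ B ∧ (k = 1 → B = 0) ∧ B ≤ 2 ∧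
      ((3 ≤ k ∧ B = 2) ∨ (k = 2 ∧ B = 1) ∨ (k = 1 ∧ B = 0)) := by
    rcases (by omega : 3 ≤ k ∨ k = 2 ∨ k = 1) with h | h | h
    · exact ⟨2, by norm_num, by omega, le_rfl, Or.inl ⟨h, rfl⟩⟩
    · exact ⟨1, by norm_num, by omega, by norm_num, Or.inr (Or.inl ⟨h, rfl⟩)⟩
    · exact ⟨0, by norm_num, by simp, by norm_num, Or.inr (Or.inr ⟨h, rfl⟩)⟩
  have hpath : ∀ c, ∃ (P : Finset (Fin k)) (G : Fin k → S → ℝ), c ∈ P ∧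
      (∀ a ∈ P, pairing (L a) lam ≤ pairing (L c) lam) ∧
      (Pareto L c → ∀ x, ∑ a, G a (Φ a x) = L c x - L r x) ∧
      (∀ a σ, a ∉ P → G a σ = 0) ∧ (∀ a σ, |G a σ| ≤ B * m) := by
    intro c
    by_cases hc : Pareto L c
    · obtain ⟨P, G, h1, h2, h3, h4, -, h5, h6, h7⟩ := exists_path_estimator hL hlo hm hdesc c hc
      refine ⟨P, G, h1, fun a ha => (h2 a ha).2, fun _ => h3, h4, fun a σ => ?_⟩
      have hcard : P.card ≤ k := by simpa using Finset.card_le_univ P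
      rcases hBk with ⟨h, rfl⟩ | ⟨h, rfl⟩ | ⟨h, rfl⟩
      · exact h5 a σ
      · rw [one_mul]; exact h7 (by omega) a σ
      · rw [h6 (by omega) a σ]; simp
    · exact ⟨{c}, fun _ _ => 0, by simp, by simp, fun h => absurd h hc, by simp,
        fun a σ => by simpa using by positivity⟩
  choose P G hcP hPle hGsum hGsupp hGB using hpath
  have hcard0 : ∀ c, (0 : ℝ) < (P c).card := fun c => by
    exact_mod_cast Finset.card_pos.2 ⟨c, hcP c⟩
  have hcardk : ∀ c, ((P c).card : ℝ) ≤ k := fun c => by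
    exact_mod_cast (by simpa using Finset.card_le_univ (P c) : (P c).card ≤ k)
  let ρ : Fin k → ℝ := fun a => ∑ c, if a ∈ P c then q c / (P c).card else 0
  let Q : Fin k → ℝ := fun a => ∑ c, if a ∈ P c then q c else 0
  let ℓ : Fin k → ℝ := fun a => pairing (L a) lam
  have hℓ0 : ∀ a, 0 ≤ ℓ a := fun a => by
    simp only [ℓ, pairing_apply]
    exact Finset.sum_nonneg fun x _ => mul_nonneg (hL a x).1 (hlam.1 x)
  have hℓ1 : ∀ a, ℓ a ≤ 1 := fun a => by
    simp only [ℓ, pairing_apply]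
    rw [← hlam.2]
    exact Finset.sum_le_sum fun x _ => mul_le_of_le_one_left (hlam.1 x) (hL a x).2
  have hρ0 : ∀ a, 0 ≤ ρ a := fun a => Finset.sum_nonneg fun c _ => by
    split_ifs
    · exact div_nonneg (hq.1 c) (hcard0 c).le
    · exact le_rfl
  have hρ1 : ∑ a, ρ a = 1 := by
    simp only [ρ]
    rw [Finset.sum_comm, ← hq.2]
    refine Finset.sum_congr rfl fun c _ => ?_
    rw [← Finset.sum_filter, Finset.sum_const, Finset.filter_univ_mem, nsmul_eq_mul]
    exact mul_div_cancel₀ _ (hcard0 c).ne'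
  have hρℓ : ∑ a, ρ a * ℓ a ≤ ∑ c, q c * ℓ c := by
    simp only [ρ, Finset.sum_mul]
    rw [Finset.sum_comm]
    refine Finset.sum_le_sum fun c _ => ?_
    have h1 : ∑ a, (if a ∈ P c then q c / (P c).card else 0) * ℓ a
        ≤ ∑ a, (if a ∈ P c then q c / (P c).card * ℓ c else 0) := by
      refine Finset.sum_le_sum fun a _ => ?_
      split_ifs with h
      · exact mul_le_mul_of_nonneg_left (hPle c a h) (div_nonneg (hq.1 c) (hcard0 c).le)
      · simp
    refine h1.trans (le_of_eq ?_)
    rw [← Finset.sum_filter, Finset.sum_const, Finset.filter_univ_mem, nsmul_eq_mul,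
      ← mul_assoc, mul_div_cancel₀ _ (hcard0 c).ne']
  have hQρ : ∀ a, Q a ≤ k * ρ a := fun a => by
    simp only [Q, ρ]
    rw [Finset.mul_sum]
    refine Finset.sum_le_sum fun c _ => ?_
    split_ifs
    · rw [← mul_div_assoc, le_div_iff₀ (hcard0 c), mul_comm]
      exact mul_le_mul_of_nonneg_right (hcardk c) (hq.1 c)
    · simp
  have hqQ : ∀ a, q a ≤ Q a := fun a => by
    have h1 : (if a ∈ P a then q a else 0) ≤ Q a :=
      Finset.single_le_sum (f := fun c => if a ∈ P c then q c else 0)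
        (fun c _ => by split_ifs; exacts [hq.1 c, le_rfl]) (Finset.mem_univ a)
    simpa [hcP a] using h1
  -- the exploration rate; for `k ≥ 2` the minimum is its first argument
  let γ : ℝ := min (2 * m * k * η) (1 / 2)
  have hγ0 : 0 < γ := lt_min (by positivity) (by norm_num)
  have hγ2 : γ ≤ 1 / 2 := min_le_right _ _
  have hγη : γ / η ≤ 2 * m * k := by
    rw [div_le_iff₀ hη0]
    exact min_le_left _ _
  let p : Fin k → ℝ := fun a => (1 - γ) * ρ a + γ / k
  have hp0 : ∀ a, 0 < p a := fun a => by
    have := mul_nonneg (by linarith : 0 ≤ 1 - γ) (hρ0 a)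
    have := div_pos hγ0 hk0
    simp only [p]; linarith
  have hpρ : ∀ a, ρ a ≤ 2 * p a := fun a => by
    have := div_pos hγ0 hk0
    simp only [p]
    nlinarith [hρ0 a]
  have hp1 : ∑ a, p a = 1 := by
    simp only [p]
    rw [Finset.sum_add_distrib, ← Finset.mul_sum, hρ1, Finset.sum_const, Finset.card_univ,
      Fintype.card_fin, nsmul_eq_mul]
    field_simp
    ring
  have hQp : ∀ a, Q a ≤ 2 * k * p a := fun a => by
    have := mul_le_mul_of_nonneg_left (hpρ a) hk0.le
    linarith [hQρ a]
  have hBp : ∀ a, η * (B * m) ≤ p a := fun a => by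
    rcases (by omega : k = 1 ∨ 2 ≤ k) with h | h
    · rw [hB1 h]
      linarith [hp0 a]
    · have hk2 : (2 : ℝ) ≤ k := by exact_mod_cast h
      have h1 : γ = 2 * m * k * η := by
        apply min_eq_left
        have h3 : 0 < m * k * η := by positivity
        nlinarith
      have h2 : γ / k = 2 * m * η := by
        rw [h1]; field_simp
      have h3 := mul_nonneg (by linarith : 0 ≤ 1 - γ) (hρ0 a)
      have h4 : η * (B * m) ≤ η * (2 * m) := by gcongr
      simp only [p, h2]
      linarith
  let H : Fin k → S → Fin k → ℝ := fun a σ c => if Pareto L c then G c a σ else p a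
  have hHp : ∀ c, Pareto L c → ∀ x, ∑ a, H a (Φ a x) c = L c x - L r x := by
    intro c hc x
    simp only [H, if_pos hc]
    exact hGsum c hc x
  have hHd : ∀ c, ¬ Pareto L c → ∀ x, ∑ a, H a (Φ a x) c = 1 := by
    intro c hc x
    simp only [H, if_neg hc]
    exact hp1
  refine ⟨(p, H), ⟨⟨fun a => (hp0 a).le, hp1⟩, hp0, fun a => ?_⟩, ?_⟩
  · rw [div_le_iff₀ (by positivity)]
    linarith [hqQ a, hQp a]
  have hbias : ∀ x, biasFn L Φ q H x ≤ 0 := by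
    intro x
    have e1 : sSup ((fun c => (∑ a, H a (Φ a x) c) - L c x) '' {c : Fin k | Pareto L c})
        ≤ - L r x := by
      apply csSup_le (Set.Nonempty.image _ ⟨r, hr⟩)
      rintro _ ⟨c, hc, rfl⟩
      beta_reduce
      rw [hHp c hc]
      linarith
    have e2 : ∑ b, q b * (L b x - ∑ a, H a (Φ a x) b) ≤ ∑ b, q b * L r x := by
      refine Finset.sum_le_sum fun b _ => mul_le_mul_of_nonneg_left ?_ (hq.1 b)
      by_cases hb : Pareto L b
      · rw [hHp b hb]; linarith
      · rw [hHd b hb]; linarith [(hL b x).2, (hL r x).1]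
    rw [← Finset.sum_mul, hq.2] at e2
    simp only [biasFn]
    linarith
  have hvar1 : ∀ a c x, p a * xi (η * H a (Φ a x) c / p a)
      ≤ η ^ 2 * ((if a ∈ P c then (B * m) ^ 2 / p a else 0) + p a) := by
    intro a c x
    have hpa := hp0 a
    by_cases hc : Pareto L c
    · simp only [H, if_pos hc]
      by_cases ha : a ∈ P c
      · simp only [if_pos ha]
        have hG := hGB c a (Φ a x)
        have hy : |η * G c a (Φ a x) / p a| ≤ 1 := by
          rw [abs_div, abs_mul, abs_of_pos hη0, abs_of_pos hpa, div_le_one hpa]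
          exact (mul_le_mul_of_nonneg_left hG hη0.le).trans (hBp a)
        have h1 := mul_le_mul_of_nonneg_left (xi_le_sq hy) hpa.le
        have h2 : p a * (η * G c a (Φ a x) / p a) ^ 2 = η ^ 2 * (G c a (Φ a x) ^ 2 / p a) := by
          field_simp
        have h3 : G c a (Φ a x) ^ 2 ≤ (B * m) ^ 2 := by
          rw [← sq_abs]
          exact pow_le_pow_left₀ (abs_nonneg _) hG 2
        have h4 : G c a (Φ a x) ^ 2 / p a ≤ (B * m) ^ 2 / p a := by gcongr
        have h5 : η ^ 2 * (G c a (Φ a x) ^ 2 / p a) ≤ η ^ 2 * ((B * m) ^ 2 / p a + p a) := by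
          apply mul_le_mul_of_nonneg_left _ (by positivity)
          linarith
        linarith
      · rw [hGsupp c a _ ha]
        have : xi 0 = 0 := by simp [xi]
        simp only [mul_zero, zero_div, this, if_neg ha]
        positivity
    · simp only [H, if_neg hc]
      rw [mul_div_assoc, div_self hpa.ne', mul_one]
      have h1 := mul_le_mul_of_nonneg_left
        (xi_le_sq (y := η) (by rw [abs_of_pos hη0]; exact hη1)) hpa.le
      have h2 : 0 ≤ η ^ 2 * (if a ∈ P c then (B * m) ^ 2 / p a else 0) := by
        split_ifs <;> positivity
      linarith
  have hvar : ∀ x, (1 / η ^ 2) * ∑ a, p a * ∑ b, q b * xi (η * H a (Φ a x) b / p a)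
      ≤ 2 * (B * m) ^ 2 * k ^ 2 + 1 := by
    intro x
    rw [one_div, inv_mul_le_iff₀ (by positivity)]
    have e1 : ∀ a, p a * ∑ b, q b * xi (η * H a (Φ a x) b / p a)
        ≤ η ^ 2 * (2 * k * (B * m) ^ 2 + p a) := by
      intro a
      have f1 : p a * ∑ b, q b * xi (η * H a (Φ a x) b / p a)
          ≤ ∑ b, q b * (η ^ 2 * ((if a ∈ P b then (B * m) ^ 2 / p a else 0) + p a)) := by
        rw [Finset.mul_sum]
        refine Finset.sum_le_sum fun b _ => ?_
        have := mul_le_mul_of_nonneg_left (hvar1 a b x) (hq.1 b)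
        linarith
      have f2 : ∑ b, q b * (η ^ 2 * ((if a ∈ P b then (B * m) ^ 2 / p a else 0) + p a))
          = η ^ 2 * ((B * m) ^ 2 * (Q a / p a) + p a * ∑ b, q b) := by
        simp only [Q]
        rw [Finset.sum_div, Finset.mul_sum, Finset.mul_sum, ← Finset.sum_add_distrib,
          Finset.mul_sum]
        refine Finset.sum_congr rfl fun b _ => ?_
        split_ifs <;> ring
      rw [f2, hq.2] at f1
      have f3 : Q a / p a ≤ 2 * k := by
        rw [div_le_iff₀ (hp0 a)]
        exact hQp a
      have f4 : (B * m) ^ 2 * (Q a / p a) ≤ (B * m) ^ 2 * (2 * k) := by gcongr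
      refine f1.trans (mul_le_mul_of_nonneg_left ?_ (by positivity))
      linarith
    refine (Finset.sum_le_sum fun a _ => e1 a).trans (le_of_eq ?_)
    rw [← Finset.mul_sum, Finset.sum_add_distrib, hp1, Finset.sum_const, Finset.card_univ,
      Fintype.card_fin, nsmul_eq_mul]
    ring
  have hlin : ∑ x, lam x * ((∑ a, (p a - q a) * L a x) / η) ≤ 2 * m * k := by
    have e1 : ∑ x, lam x * ((∑ a, (p a - q a) * L a x) / η) = (∑ a, (p a - q a) * ℓ a) / η := by
      simp only [ℓ, pairing_apply]
      simp only [Finset.sum_div, Finset.mul_sum]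
      rw [Finset.sum_comm]
      refine Finset.sum_congr rfl fun a _ => ?_
      refine Finset.sum_congr rfl fun x _ => ?_
      ring
    have e2 : ∑ a, (p a - q a) * ℓ a
        = (1 - γ) * ∑ a, ρ a * ℓ a + γ / k * ∑ a, ℓ a - ∑ a, q a * ℓ a := by
      rw [Finset.mul_sum, Finset.mul_sum, ← Finset.sum_add_distrib, ← Finset.sum_sub_distrib]
      exact Finset.sum_congr rfl fun a _ => by simp only [p]; ring
    have e3 : ∑ a, ℓ a ≤ k := by
      have := Finset.sum_le_sum fun a (_ : a ∈ Finset.univ) => hℓ1 a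
      simpa using this
    have e4 : γ / k * ∑ a, ℓ a ≤ γ := by
      have := mul_le_mul_of_nonneg_left e3 (div_pos hγ0 hk0).le
      rwa [div_mul_cancel₀ _ hk0.ne'] at this
    have e5 : 0 ≤ ∑ a, q a * ℓ a := Finset.sum_nonneg fun a _ => mul_nonneg (hq.1 a) (hℓ0 a)
    have e6 : ∑ a, (p a - q a) * ℓ a ≤ γ := by
      rw [e2]
      nlinarith [mul_le_mul_of_nonneg_left hρℓ (by linarith : 0 ≤ 1 - γ), mul_nonneg hγ0.le e5]
    rw [e1]
    exact (div_le_div_of_nonneg_right e6 hη0.le).trans hγη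
  have htotal : ∑ x, lam x * objectiveAt L Φ η q x (p, H)
      ≤ 2 * m * k + (2 * (B * m) ^ 2 * k ^ 2 + 1) := by
    have e1 : ∑ x, lam x * objectiveAt L Φ η q x (p, H)
        ≤ ∑ x, (lam x * ((∑ a, (p a - q a) * L a x) / η)
          + lam x * (2 * (B * m) ^ 2 * k ^ 2 + 1)) := by
      refine Finset.sum_le_sum fun x _ => ?_
      rw [← mul_add]
      refine mul_le_mul_of_nonneg_left ?_ (hlam.1 x)
      have h1 := div_nonpos_of_nonpos_of_nonneg (hbias x) hη0.le
      have h2 := hvar x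
      simp only [objectiveAt]
      linarith
    rw [Finset.sum_add_distrib, ← Finset.sum_mul, hlam.2, one_mul] at e1
    linarith
  refine htotal.trans ?_
  rcases hBk with ⟨h, rfl⟩ | ⟨h, rfl⟩ | ⟨h, rfl⟩
  · have hk3 : (3 : ℝ) ≤ k := by exact_mod_cast h
    have h1 : (3 : ℝ) ≤ m * k := by nlinarith
    have h2 : 0 ≤ (m * k : ℝ) ^ 2 * (k - 3) := mul_nonneg (by positivity) (by linarith)
    nlinarith
  · have : (k : ℝ) = 2 := by exact_mod_cast h
    rw [this]
    nlinarith
  · have : (k : ℝ) = 1 := by exact_mod_cast h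
    rw [this]
    nlinarith

/-- Lemma 3 of the paper: for a non-degenerate locally observable game with no
duplicate actions and 0 < η ≤ 1/(2mk²), sup_{q ∈ 𝒫_k} opt'_q(η) ≤ 3m²k³, where m
is the maximum number of distinct feedback symbols in a row of Φ. -/
theorem stmt_2 {S : Type*} [DecidableEq S] (k d : ℕ) (hk : 0 < k) (hd : 0 < d)
    (L : Fin k → Fin d → ℝ) (Φ : Fin k → Fin d → S)
    (hL : ∀ a x, L a x ∈ Set.Icc (0 : ℝ) 1)
    (hnd : NonDegenerate L) (hdup : NoDuplicateActions L)
    (hlo : LocallyObservable L Φ)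
    (m : ℕ) (hm : m = Finset.univ.sup fun a : Fin k => (Finset.univ.image (Φ a)).card)
    (η : ℝ) (hη0 : 0 < η) (hη : η ≤ 1 / (2 * (m : ℝ) * (k : ℝ) ^ 2)) :
    ∀ q ∈ probSimplex k, optValue L Φ η q ≤ 3 * (m : ℝ) ^ 2 * (k : ℝ) ^ 3 := by
  intro q hq
  have hm' : ∀ a, (Finset.univ.image (Φ a)).card ≤ m := fun a => by
    rw [hm]
    exact Finset.le_sup (f := fun a : Fin k => (Finset.univ.image (Φ a)).card) (Finset.mem_univ a)
  have hm1 : 1 ≤ m := by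
    have : 0 < (Finset.univ.image (Φ ⟨0, hk⟩)).card :=
      Finset.card_pos.2 ⟨_, Finset.mem_image_of_mem _ (Finset.mem_univ ⟨0, hd⟩)⟩
    have := hm' ⟨0, hk⟩
    omega
  have : Nonempty (Fin d) := ⟨⟨0, hd⟩⟩
  let lam₀ : Fin d → ℝ := Pi.single ⟨0, hd⟩ 1
  have hlam₀ : lam₀ ∈ probSimplex d := ⟨fun i => by
    by_cases hi : i = ⟨0, hd⟩ <;> simp [lam₀, hi], by simp [lam₀]⟩
  obtain ⟨r, -, hr, -⟩ := exists_descent hk hd hnd hdup hlam₀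
  rw [optValue]
  by_cases hbdd : BddBelow {v : ℝ | ∃ G : Fin k → S → Fin k → ℝ, ∃ p : Fin k → ℝ,
    p ∈ probSimplex k ∧ (∀ a, q a / (2 * (k : ℝ)) ≤ p a) ∧ v = ebOObjective L Φ η q p G}
  · refine le_of_forall_pos_le_add fun ε hε => ?_
    obtain ⟨⟨p, G⟩, hz, hlt⟩ := exists_forall_lt_of_convex hd (objectiveAt L Φ η q)
      (convexOn_objectiveAt hη0 hq.1 ⟨r, hr⟩)
      (fun lam hlam => exists_feasible_le hk hd hL hnd hdup hlo hm' hm1 hη0 hη hq hlam) hε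
    refine (csInf_le hbdd ⟨G, p, hz.1, hz.2.2, rfl⟩).trans ?_
    exact ciSup_le fun x => (hlt x).le
  · -- the infimum of a set of reals that is unbounded below is `0` by convention
    rw [Real.sInf_of_not_bddBelow hbdd]
    positivity

end
end

section
/- Let T and k be positive integers, let Π be a nonempty subset of Fin k of cardinality k_Π, and let a* ∈ Π. For t ∈ {1,…,T}, let q_t be a probability vector on Fin k with q_t(a) = 0 for all a ∉ Π. Let Q = ∑_{t=1}^T (1 − q_t(a*)) and suppose Q > 0. Then ∑_{t=1}^T H(q_t) ≤ Q · log( e · k_Π · T / Q ), where H(q) = −∑_a q(a) log q(a) is the Shannon entropy with the convention 0 log 0 = 0. -/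
/-!
The tangent-line inequality `-x log x ≤ c - x - x log c` (for `x ≥ 0`, `c > 0`) carries the proof.
With `n = |Π|`, take `c = 1` at `a*` and `c = Q / (n T)` at every other action of `Π`. In round `t`
the terms `1 - q_t(a*)` cancel, which leaves `H(q_t) ≤ (1 - q_t(a*)) log (n T / Q) + Q / T`, and
summing over the `T` rounds gives `Q log (n T / Q) + Q = Q log (e n T / Q)`.
-/

/-- The concave function `-x log x` lies below its tangent line at `c`. -/
lemma negMulLog_le_tangent {x c : ℝ} (hx : 0 ≤ x) (hc : 0 < c) :
    Real.negMulLog x ≤ c - x - x * Real.log c := by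
  rcases hx.eq_or_lt with rfl | hx
  · simp [hc.le]
  · have h := Real.log_le_sub_one_of_pos (div_pos hc hx)
    rw [Real.log_div hc.ne' hx.ne'] at h
    have h2 := mul_le_mul_of_nonneg_left h hx.le
    have h3 : x * (c / x - 1) = c - x := by field_simp
    rw [Real.negMulLog]
    linarith

/-- Lemma 4 of the paper: for probability vectors q_t supported on a nonempty
set Π ⊆ [k] of cardinality k_Π, with Q = ∑_{t=1}^T (1 − q_t(a*)) > 0 for a* ∈ Π,
∑_{t=1}^T H(q_t) ≤ Q log(e k_Π T / Q), where H is the Shannon entropy. -/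
theorem stmt_3 (T k : ℕ) (hT : 0 < T) (hk : 0 < k)
    (P : Finset (Fin k)) (hP : P.Nonempty) (astar : Fin k) (ha : astar ∈ P)
    (q : ℕ → Fin k → ℝ)
    (hq0 : ∀ t ∈ Finset.Icc 1 T, ∀ a, 0 ≤ q t a)
    (hq1 : ∀ t ∈ Finset.Icc 1 T, ∑ a, q t a = 1)
    (hqP : ∀ t ∈ Finset.Icc 1 T, ∀ a, a ∉ P → q t a = 0)
    (Q : ℝ) (hQ : Q = ∑ t ∈ Finset.Icc 1 T, (1 - q t astar)) (hQpos : 0 < Q) :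
    ∑ t ∈ Finset.Icc 1 T, ∑ a, Real.negMulLog (q t a) ≤
      Q * Real.log (Real.exp 1 * (P.card : ℝ) * (T : ℝ) / Q) := by
  have hn : (0 : ℝ) < P.card := by exact_mod_cast hP.card_pos
  have hT' : (0 : ℝ) < T := by exact_mod_cast hT
  set c : ℝ := Q / (P.card * T) with hc
  have hcpos : 0 < c := by positivity
  have hlog : Real.log (Real.exp 1 * (P.card : ℝ) * (T : ℝ) / Q) = 1 - Real.log c := by
    have h : Real.exp 1 * (P.card : ℝ) * (T : ℝ) / Q = Real.exp 1 / c := by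
      rw [hc]; field_simp
    rw [h, Real.log_div (Real.exp_pos 1).ne' hcpos.ne', Real.log_exp]
  have key : ∀ t ∈ Finset.Icc 1 T, ∑ a, Real.negMulLog (q t a) ≤
      (1 - q t astar) * (-Real.log c) + P.card * c := by
    intro t ht
    have e1 : ∑ a, Real.negMulLog (q t a) = ∑ a ∈ P, Real.negMulLog (q t a) :=
      (Finset.sum_subset (Finset.subset_univ P)
        fun a _ h => by simp [hqP t ht a h]).symm
    have e2 : ∑ a ∈ P, q t a = 1 := by
      rw [← hq1 t ht]
      exact Finset.sum_subset (Finset.subset_univ P) fun a _ h => hqP t ht a h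
    rw [← Finset.add_sum_erase P _ ha] at e1 e2
    have b1 := negMulLog_le_tangent (hq0 t ht astar) one_pos
    have b2 : ∑ a ∈ P.erase astar, Real.negMulLog (q t a) ≤
        ∑ a ∈ P.erase astar, (c - q t a - q t a * Real.log c) :=
      Finset.sum_le_sum fun a _ => negMulLog_le_tangent (hq0 t ht a) hcpos
    rw [Finset.sum_sub_distrib, Finset.sum_sub_distrib, ← Finset.sum_mul, Finset.sum_const,
      nsmul_eq_mul, eq_sub_of_add_eq' e2] at b2
    have hcard : ((P.erase astar).card : ℝ) * c ≤ P.card * c := by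
      gcongr
      exact Finset.erase_subset _ _
    rw [Real.log_one] at b1
    rw [e1]
    linarith
  refine (Finset.sum_le_sum key).trans ?_
  rw [Finset.sum_add_distrib, ← Finset.sum_mul, ← hQ, hlog, Finset.sum_const, Nat.card_Icc,
    nsmul_eq_mul, Nat.add_sub_cancel]
  have h : (T : ℝ) * (P.card * c) = Q := by rw [hc]; field_simp
  rw [h]
  linarith
end

section
/- Let k be a positive integer, β > 0, ℓ ∈ ℝ^k, and let p, q ∈ ℝ^k be probability vectors with strictly positive entries. Define the Bregman divergence D(q,p) = β · ∑_{a=1}^k ( q_a log(q_a / p_a) + p_a − q_a ) and ξ(x) = exp(−x) + x − 1. Then ⟨ℓ, p − q⟩ − D(q,p) ≤ β · ∑_{a=1}^k p_a · ξ(ℓ_a / β). -/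
/-!
The inequality holds coordinate by coordinate. With `x = ℓ_a / β`, cancelling common terms reduces
it to `q * (u + 1) ≤ p * exp (-x)` where `u = -x - log (q / p)`. Since `q * exp u = p * exp (-x)`,
this is the tangent-line bound `u + 1 ≤ exp u` multiplied by `q > 0`.
-/

/-- The one-coordinate form of the bound, normalised to `β = 1`. -/
lemma entropy_stability_coord (x p q : ℝ) (hp : 0 < p) (hq : 0 < q) :
    x * (p - q) - (q * Real.log (q / p) + p - q) ≤ p * (Real.exp (-x) + x - 1) := by
  have hu := mul_le_mul_of_nonneg_left (Real.add_one_le_exp (-x - Real.log (q / p))) hq.le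
  have he : q * Real.exp (-x - Real.log (q / p)) = p * Real.exp (-x) := by
    rw [Real.exp_sub, Real.exp_log (div_pos hq hp)]
    field_simp
  rw [he] at hu
  linarith

/-- Lemma 6 of the paper: stability bound for FTRL with the Shannon entropy regularizer.
For β > 0, ℓ ∈ ℝ^k and strictly positive probability vectors p, q,
⟨ℓ, p − q⟩ − D(q,p) ≤ β ∑_a p_a ξ(ℓ_a/β), where
D(q,p) = β ∑_a (q_a log(q_a/p_a) + p_a − q_a) and ξ(x) = exp(−x) + x − 1. -/
theorem stmt_5 (k : ℕ) (hk : 0 < k) (β : ℝ) (hβ : 0 < β)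
    (l p q : Fin k → ℝ)
    (hp0 : ∀ a, 0 < p a) (hp1 : ∑ a, p a = 1)
    (hq0 : ∀ a, 0 < q a) (hq1 : ∑ a, q a = 1) :
    (∑ a, l a * (p a - q a)) -
        β * ∑ a, (q a * Real.log (q a / p a) + p a - q a) ≤
      β * ∑ a, p a * (Real.exp (-(l a / β)) + l a / β - 1) := by
  rw [Finset.mul_sum, Finset.mul_sum, ← Finset.sum_sub_distrib]
  refine Finset.sum_le_sum fun a _ => ?_
  have h := mul_le_mul_of_nonneg_left
    (entropy_stability_coord (l a / β) (p a) (q a) (hp0 a) (hq0 a)) hβ.le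
  have hl : β * (l a / β * (p a - q a)) = l a * (p a - q a) := by
    field_simp
  rwa [mul_sub, hl] at h
end

section
/- Let β > 0, ℓ ∈ ℝ, and x, y > 0. Then ℓ·(x − y) − β·( y log(y/x) + x − y ) ≤ β · x · ( exp(−ℓ/β) + ℓ/β − 1 ). -/
/-- Scalar inequality (stab_bound_sub): for β > 0, ℓ ∈ ℝ, x, y > 0,
ℓ·(x − y) − β·(y log(y/x) + x − y) ≤ β·x·(exp(−ℓ/β) + ℓ/β − 1). -/
theorem stmt_6 (β l x y : ℝ) (hβ : 0 < β) (hx : 0 < x) (hy : 0 < y) :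
    l * (x - y) - β * (y * Real.log (y / x) + x - y) ≤
      β * x * (Real.exp (-(l / β)) + l / β - 1) := by
  obtain ⟨z, rfl⟩ : ∃ z, l = β * z := ⟨l / β, by field_simp⟩
  have hβ_ne : β ≠ 0 := ne_of_gt hβ
  rw [mul_div_cancel_left₀ z hβ_ne]
  -- With `l = β * z`, the claim is `β * y` times the tangent-line bound `t + 1 ≤ exp t`
  -- at `t = -z - log (y / x)`, since `y * exp t = x * exp (-z)`.
  have hexp : y * Real.exp (-z - Real.log (y / x)) = x * Real.exp (-z) := by
    rw [Real.exp_sub, Real.exp_log (div_pos hy hx)]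
    field_simp
  have htangent := mul_le_mul_of_nonneg_left
    (Real.add_one_le_exp (-z - Real.log (y / x))) (mul_pos hβ hy).le
  rw [mul_assoc β y (Real.exp _), hexp] at htangent
  linarith
end

section
/- Let k be a positive integer, β > 0, ℓ ∈ ℝ^k with |ℓ_a − ℓ_b| ≤ β for all a, b ∈ Fin k, and let p, q ∈ ℝ^k be probability vectors with strictly positive entries. Define D(q,p) = β · ∑_{a=1}^k ( q_a log(q_a / p_a) + p_a − q_a ). Then ⟨ℓ, p − q⟩ − D(q,p) ≤ (1/β) · min_{a' ∈ Fin k} ∑_{a=1}^k p_a (ℓ_a − ℓ_{a'})². -/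
/-!
The left-hand side is unchanged when a constant is subtracted from `l`, because `p` and `q` have
the same total mass; subtract the value `l a'` at a minimizing index `a'`. The claim then
holds coordinate by coordinate: with `x = (l a - l a') / β ∈ [-1, 1]`, maximizing over `q a > 0`
gives at most `β * p a * (exp (-x) + x - 1)`, and `exp (-x) + x - 1 ≤ x ^ 2`.
-/

/-- The one-coordinate stability bound, scaled to `β = 1`. -/
lemma entropic_stability_coord (x p q : ℝ) (hx : |x| ≤ 1) (hp : 0 < p) (hq : 0 < q) :
    x * (p - q) - (q * Real.log (q / p) + p - q) ≤ p * x ^ 2 := by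
  have hexp : Real.exp (-x) - 1 + x ≤ x ^ 2 := by
    have h := (abs_le.mp (Real.abs_exp_sub_one_sub_id_le (x := -x) (by simpa using hx))).2
    rw [neg_sq] at h
    linarith
  -- Fenchel–Young for the entropy: `1 + t ≤ exp t` at `t = -x - log (q / p)`, multiplied by `q`.
  have hFY : q * (-x - Real.log (q / p) + 1) ≤ p * Real.exp (-x) := by
    have h := mul_le_mul_of_nonneg_left (Real.add_one_le_exp (-x - Real.log (q / p))) hq.le
    rw [Real.exp_sub, Real.exp_log (div_pos hq hp)] at h
    refine h.trans_eq ?_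
    field_simp
  nlinarith [mul_le_mul_of_nonneg_left hexp hp.le]

/-- Inequality (stab_bound_global_1): if β > 0 and |ℓ_a − ℓ_b| ≤ β for all a, b, then
⟨ℓ, p − q⟩ − D(q,p) ≤ (1/β) · min_{a'} ∑_a p_a (ℓ_a − ℓ_{a'})², where
D(q,p) = β ∑_a (q_a log(q_a/p_a) + p_a − q_a) is the Bregman divergence of
the Shannon entropy regularizer. -/
theorem stmt_9 (k : ℕ) (hk : 0 < k) (β : ℝ) (hβ : 0 < β)
    (l p q : Fin k → ℝ) (hl : ∀ a b, |l a - l b| ≤ β)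
    (hp0 : ∀ a, 0 < p a) (hp1 : ∑ a, p a = 1)
    (hq0 : ∀ a, 0 < q a) (hq1 : ∑ a, q a = 1) :
    (∑ a, l a * (p a - q a)) -
        β * ∑ a, (q a * Real.log (q a / p a) + p a - q a) ≤
      (1 / β) * Finset.univ.inf' (Finset.univ_nonempty_iff.mpr ⟨⟨0, hk⟩⟩)
        (fun a' => ∑ a, p a * (l a - l a') ^ 2) := by
  obtain ⟨a', -, ha'⟩ := Finset.exists_mem_eq_inf'
    (Finset.univ_nonempty_iff.mpr ⟨⟨0, hk⟩⟩) (fun a' => ∑ a, p a * (l a - l a') ^ 2)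
  rw [ha']
  have hshift : ∑ a, l a * (p a - q a) = ∑ a, (l a - l a') * (p a - q a) := by
    simp only [sub_mul, Finset.sum_sub_distrib, ← Finset.mul_sum, hp1, hq1]
    simp
  rw [hshift, Finset.mul_sum, Finset.mul_sum, ← Finset.sum_sub_distrib]
  refine Finset.sum_le_sum fun a _ => ?_
  have hx : |(l a - l a') / β| ≤ 1 := by
    rw [abs_div, abs_of_pos hβ]
    exact (div_le_one hβ).mpr (hl a a')
  have h := mul_le_mul_of_nonneg_left
    (entropic_stability_coord _ (p a) (q a) hx (hp0 a) (hq0 a)) hβ.le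
  calc _ = β * ((l a - l a') / β * (p a - q a) -
        (q a * Real.log (q a / p a) + p a - q a)) := by
        rw [mul_sub β ((l a - l a') / β * (p a - q a)), ← mul_assoc, mul_div_cancel₀ _ hβ.ne']
    _ ≤ _ := h
    _ = _ := by field_simp
end

section
/- Let T and k be positive integers, let Π be a nonempty subset of Fin k, let a* ∈ Π, let ŷ_1, …, ŷ_T ∈ ℝ^k, and let η_1, …, η_{T+1} > 0. For t ∈ {1,…,T+1} define the probability vector q_t on Fin k by q_t(a) = 𝟙{a ∈ Π} · exp(−η_t ∑_{s=1}^{t−1} ŷ_s(a)) / ∑_{b ∈ Π} exp(−η_t ∑_{s=1}^{t−1} ŷ_s(b)). Then ∑_{t=1}^T ∑_{a=1}^k q_t(a) (ŷ_t(a) − ŷ_t(a*)) ≤ ∑_{t=1}^T (1/η_{t+1} − 1/η_t) H(q_{t+1}) + H(q_1)/η_1 + ∑_{t=1}^T (1/η_t) ∑_{a=1}^k q_t(a) · ξ(η_t ŷ_t(a)), where H(q) = −∑_a q(a) log q(a) is the Shannon entropy (with 0 log 0 = 0) and ξ(x) = exp(−x) + x − 1. -/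
/-!
The potential `Φ t = -(1 / η t) * log Z t`, with `Z t` the normalizing constant of `q t`, telescopes.
In one round, `log x ≤ x - 1` applied to the ratio of partition functions at the fixed rate `η t`
yields the stability term `ξ` (`ftrl_step`). Replacing the rate `η t` by `η (t + 1)` costs
`(1 / η (t + 1) - 1 / η t) * H (q (t + 1))`, by the Gibbs variational inequality
`⟨p, g⟩ + H p ≤ log ∑ exp g` (`gibbs_le`), which is an equality at the softmax of `g`
(`entropy_softmax`). Finally `Φ 1 = -H (q 1) / η 1`, as the first iterate is uniform on the support,
and `Φ (T + 1)` is at most the cumulative loss of `a*`, since `Z (T + 1)` is at least its own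
summand at `a*`.
-/

/-- Partition function over `P` of the losses `L` at learning rate `η`. -/
noncomputable def partitionFn {ι : Type*} (P : Finset ι) (η : ℝ) (L : ι → ℝ) : ℝ :=
  ∑ b ∈ P, Real.exp (-η * L b)

lemma partitionFn_pos {ι : Type*} {P : Finset ι} (hP : P.Nonempty) (η : ℝ) (L : ι → ℝ) :
    0 < partitionFn P η L :=
  Finset.sum_pos (fun _ _ => Real.exp_pos _) hP

/-- Gibbs variational inequality, for losses `L` at rate `η`. -/
lemma gibbs_le {ι : Type*} {P : Finset ι} (hP : P.Nonempty) (η : ℝ) (L p : ι → ℝ)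
    (hp : ∀ a ∈ P, 0 < p a) (hsum : ∑ a ∈ P, p a = 1) :
    -η * ∑ a ∈ P, p a * L a + ∑ a ∈ P, Real.negMulLog (p a)
      ≤ Real.log (partitionFn P η L) := by
  have hZ := partitionFn_pos hP η L
  have key : ∀ a ∈ P, -η * (p a * L a) + Real.negMulLog (p a)
      ≤ p a * Real.log (partitionFn P η L)
        + (Real.exp (-η * L a) / partitionFn P η L - p a) := by
    intro a ha
    have hpa := hp a ha
    -- `log x ≤ x - 1` at the density ratio of the softmax of `-η L` to `p`
    have h := Real.log_le_sub_one_of_pos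
      (show 0 < Real.exp (-η * L a) / (partitionFn P η L * p a) by positivity)
    rw [Real.log_div (Real.exp_pos _).ne' (by positivity), Real.log_exp,
      Real.log_mul hZ.ne' hpa.ne'] at h
    have h2 := mul_le_mul_of_nonneg_left h hpa.le
    have h3 : p a * (Real.exp (-η * L a) / (partitionFn P η L * p a) - 1)
        = Real.exp (-η * L a) / partitionFn P η L - p a := by
      field_simp
    rw [h3] at h2
    unfold Real.negMulLog
    linarith
  have h := Finset.sum_le_sum key
  rw [Finset.sum_add_distrib, Finset.sum_add_distrib, Finset.sum_sub_distrib, ← Finset.mul_sum,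
    ← Finset.sum_mul, ← Finset.sum_div, hsum] at h
  have h1 : (∑ a ∈ P, Real.exp (-η * L a)) / partitionFn P η L = 1 := div_self hZ.ne'
  rw [h1] at h
  linarith

lemma softmax_sum {ι : Type*} {P : Finset ι} (hP : P.Nonempty) (η : ℝ) (L p : ι → ℝ)
    (hp : ∀ a ∈ P, p a = Real.exp (-η * L a) / partitionFn P η L) : ∑ a ∈ P, p a = 1 := by
  rw [Finset.sum_congr rfl hp, ← Finset.sum_div]
  exact div_self (partitionFn_pos hP η L).ne'

lemma entropy_softmax {ι : Type*} {P : Finset ι} (hP : P.Nonempty) (η : ℝ) (L p : ι → ℝ)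
    (hp : ∀ a ∈ P, p a = Real.exp (-η * L a) / partitionFn P η L) :
    ∑ a ∈ P, Real.negMulLog (p a)
      = Real.log (partitionFn P η L) + η * ∑ a ∈ P, p a * L a := by
  have key : ∀ a ∈ P, Real.negMulLog (p a)
      = p a * Real.log (partitionFn P η L) + η * (p a * L a) := by
    intro a ha
    have hlog : Real.log (p a) = -η * L a - Real.log (partitionFn P η L) := by
      rw [hp a ha, Real.log_div (Real.exp_pos _).ne' (partitionFn_pos hP η L).ne', Real.log_exp]
    rw [Real.negMulLog, hlog]
    ring
  rw [Finset.sum_congr rfl key, Finset.sum_add_distrib, ← Finset.sum_mul, ← Finset.mul_sum,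
    softmax_sum hP η L p hp, one_mul]

/-- One round: with `Φ = -(1 / η) * log Z`, the loss `⟨p, y⟩` of the current iterate `p` is at most
the increase of `Φ`, plus the cost of the change of rate from `η` to `η'`, plus the stability
term. -/
lemma ftrl_step {ι : Type*} {P : Finset ι} (hP : P.Nonempty) {η η' : ℝ} (hη : 0 < η)
    (hη' : 0 < η') (L L' y p r : ι → ℝ) (hL : ∀ a, L' a = L a + y a)
    (hp : ∀ a ∈ P, p a = Real.exp (-η * L a) / partitionFn P η L)
    (hr : ∀ a ∈ P, r a = Real.exp (-η' * L' a) / partitionFn P η' L') :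
    ∑ a ∈ P, p a * y a ≤
      -(Real.log (partitionFn P η' L') / η') + Real.log (partitionFn P η L) / η
        + (1 / η' - 1 / η) * ∑ a ∈ P, Real.negMulLog (r a)
        + (1 / η) * ∑ a ∈ P, p a * (Real.exp (-(η * y a)) + η * y a - 1) := by
  have hZ := partitionFn_pos hP η L
  have hZm := partitionFn_pos hP η L'
  have hG := gibbs_le hP η L' r
    (fun a ha => by rw [hr a ha]; exact div_pos (Real.exp_pos _) (partitionFn_pos hP η' L'))
    (softmax_sum hP η' L' r hr)
  have hE := entropy_softmax hP η' L' r hr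
  have hS : ∑ a ∈ P, p a * Real.exp (-(η * y a)) = partitionFn P η L' / partitionFn P η L := by
    rw [partitionFn, Finset.sum_div]
    refine Finset.sum_congr rfl fun a ha => ?_
    rw [hp a ha, hL a, div_mul_eq_mul_div, ← Real.exp_add]
    congr 2
    ring
  have hlog := Real.log_le_sub_one_of_pos (div_pos hZm hZ)
  rw [Real.log_div hZm.ne' hZ.ne', ← hS] at hlog
  have hξ : ∑ a ∈ P, p a * (Real.exp (-(η * y a)) + η * y a - 1)
      = ∑ a ∈ P, p a * Real.exp (-(η * y a)) + η * ∑ a ∈ P, p a * y a - 1 := by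
    have hone := softmax_sum hP η L p hp
    rw [eq_sub_iff_add_eq, ← hone, Finset.mul_sum, ← Finset.sum_add_distrib,
      ← Finset.sum_add_distrib, hone]
    exact Finset.sum_congr rfl fun a _ => by ring
  rw [hξ]
  generalize ∑ a ∈ P, Real.negMulLog (r a) = H at *
  generalize ∑ a ∈ P, r a * L' a = W at *
  generalize ∑ a ∈ P, p a * Real.exp (-(η * y a)) = S at *
  generalize ∑ a ∈ P, p a * y a = Y at *
  generalize Real.log (partitionFn P η' L') = z' at *
  generalize Real.log (partitionFn P η L) = z at *
  have hfin : 0 ≤ (z + η * W - H + S - 1) / η := div_nonneg (by linarith) hη.le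
  have hz : z' = H - η' * W := by linarith
  have hid : -(z' / η') + z / η + (1 / η' - 1 / η) * H + 1 / η * (S + η * Y - 1)
      = Y + (z + η * W - H + S - 1) / η := by
    rw [hz]
    field_simp
    ring
  linarith

/-- Deterministic FTRL regret inequality (ftrl_local) from the proof of Lemma 5 of
the paper: the exponential-weights iterates q_t over Π with learning rates η_t
satisfy ∑_t ⟨q_t, ŷ_t − ŷ_t(a*) 1⟩ ≤ penalty + stability, where the penalty
involves the Shannon entropy H and the stability term involves
ξ(x) = exp(−x) + x − 1. -/
theorem stmt_10 (T k : ℕ) (hT : 0 < T) (hk : 0 < k)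
    (P : Finset (Fin k)) (hP : P.Nonempty) (astar : Fin k) (ha : astar ∈ P)
    (y : ℕ → Fin k → ℝ) (η : ℕ → ℝ)
    (hη : ∀ t ∈ Finset.Icc 1 (T + 1), 0 < η t)
    (q : ℕ → Fin k → ℝ)
    (hq : ∀ t ∈ Finset.Icc 1 (T + 1), ∀ a : Fin k,
      q t a =
        (if a ∈ P then Real.exp (-(η t) * ∑ s ∈ Finset.Ico 1 t, y s a) else 0) /
          ∑ b ∈ P, Real.exp (-(η t) * ∑ s ∈ Finset.Ico 1 t, y s b)) :
    ∑ t ∈ Finset.Icc 1 T, ∑ a, q t a * (y t a - y t astar) ≤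
      (∑ t ∈ Finset.Icc 1 T,
          (1 / η (t + 1) - 1 / η t) * (∑ a, Real.negMulLog (q (t + 1) a))) +
        (∑ a, Real.negMulLog (q 1 a)) / η 1 +
        ∑ t ∈ Finset.Icc 1 T,
          (1 / η t) * ∑ a, q t a *
            (Real.exp (-(η t * y t a)) + η t * y t a - 1) := by
  have hsub : ∀ t ∈ Finset.Icc 1 (T + 1), ∀ f : Fin k → ℝ, (∀ a, q t a = 0 → f a = 0) →
      ∑ a, f a = ∑ a ∈ P, f a := by
    intro t ht f hf
    refine (Finset.sum_subset (Finset.subset_univ P) fun a _ haP => hf a ?_).symm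
    rw [hq t ht a, if_neg haP, zero_div]
  set L : ℕ → Fin k → ℝ := fun t a => ∑ s ∈ Finset.Ico 1 t, y s a with hLdef
  have hq' : ∀ t ∈ Finset.Icc 1 (T + 1), ∀ a ∈ P,
      q t a = Real.exp (-(η t) * L t a) / partitionFn P (η t) (L t) := by
    intro t ht a haP
    rw [hq t ht a, if_pos haP]
    rfl
  have hLsucc : ∀ t, 1 ≤ t → ∀ a, L (t + 1) a = L t a + y t a := fun t ht a =>
    Finset.sum_Ico_succ_top ht _
  have main : ∀ n, n ≤ T →
      ∑ t ∈ Finset.Icc 1 n, ∑ a, q t a * (y t a - y t astar) ≤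
        (∑ t ∈ Finset.Icc 1 n,
            (1 / η (t + 1) - 1 / η t) * (∑ a, Real.negMulLog (q (t + 1) a))) +
          ∑ t ∈ Finset.Icc 1 n,
            (1 / η t) * ∑ a, q t a * (Real.exp (-(η t * y t a)) + η t * y t a - 1)
          - Real.log (partitionFn P (η (n + 1)) (L (n + 1))) / η (n + 1)
          + Real.log (partitionFn P (η 1) (L 1)) / η 1 - L (n + 1) astar := by
    intro n
    induction n with
    | zero => intro _; simp [hLdef]
    | succ n ih =>
      intro hn
      have ih := ih (by omega)
      have h1 : n + 1 ∈ Finset.Icc 1 (T + 1) := Finset.mem_Icc.2 ⟨by omega, by omega⟩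
      have h2 : n + 1 + 1 ∈ Finset.Icc 1 (T + 1) := Finset.mem_Icc.2 ⟨by omega, by omega⟩
      have hs := ftrl_step hP (hη _ h1) (hη _ h2) (L (n + 1)) (L (n + 1 + 1)) (y (n + 1))
        (q (n + 1)) (q (n + 1 + 1)) (hLsucc _ (by omega)) (hq' _ h1) (hq' _ h2)
      rw [← hsub _ h1 (fun a => q (n + 1) a * y (n + 1) a) (fun a h => by simp [h]),
        ← hsub _ h2 (fun a => Real.negMulLog (q (n + 1 + 1) a)) (fun a h => by simp [h]),
        ← hsub _ h1 (fun a => q (n + 1) a * (Real.exp (-(η (n + 1) * y (n + 1) a))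
          + η (n + 1) * y (n + 1) a - 1)) (fun a h => by simp [h])] at hs
      have hone : ∑ a, q (n + 1) a = 1 := by
        rw [hsub _ h1 (q (n + 1)) (fun a h => h)]
        exact softmax_sum hP _ _ _ (hq' _ h1)
      have hreg : ∑ a, q (n + 1) a * (y (n + 1) a - y (n + 1) astar)
          = ∑ a, q (n + 1) a * y (n + 1) a - y (n + 1) astar := by
        simp only [mul_sub, Finset.sum_sub_distrib, ← Finset.sum_mul, hone, one_mul]
      rw [Finset.sum_Icc_succ_top (by omega), Finset.sum_Icc_succ_top (by omega),
        Finset.sum_Icc_succ_top (by omega), hreg, hLsucc (n + 1) (by omega) astar]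
      linarith
  have h1 : 1 ∈ Finset.Icc 1 (T + 1) := Finset.mem_Icc.2 ⟨le_rfl, by omega⟩
  have hT1 : T + 1 ∈ Finset.Icc 1 (T + 1) := Finset.mem_Icc.2 ⟨by omega, le_rfl⟩
  have hH1 : ∑ a, Real.negMulLog (q 1 a) = Real.log (partitionFn P (η 1) (L 1)) := by
    rw [hsub 1 h1 _ (fun a h => by simp [h]), entropy_softmax hP _ _ _ (hq' 1 h1)]
    simp [hLdef]
  have hstar : -L (T + 1) astar
      ≤ Real.log (partitionFn P (η (T + 1)) (L (T + 1))) / η (T + 1) := by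
    rw [le_div_iff₀ (hη _ hT1), Real.le_log_iff_exp_le (partitionFn_pos hP _ _)]
    have h := Finset.single_le_sum (f := fun b => Real.exp (-(η (T + 1)) * L (T + 1) b))
      (fun b _ => (Real.exp_pos _).le) ha
    refine le_trans (le_of_eq ?_) h
    congr 1
    ring
  have hm := main T le_rfl
  rw [hH1]
  linarith
end

section
/- Let T be a positive integer, L > 0, c₁ > 0, and let h_1, …, h_{T+1} be reals with 0 ≤ h_t ≤ L for all t and h_{T+1} ≤ h_1. For t ∈ {1,…,T} define δ_t = c₁ / sqrt( 1 + (1/L) ∑_{s=1}^{t} h_s ). Then ∑_{t=1}^T δ_t · h_{t+1} ≤ 2 c₁ sqrt(L) · sqrt( ∑_{t=1}^{T} h_t ). -/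
/-! Write `S t = h 1 + ⋯ + h t`. The weight of `h (t + 1)` is `c1 √L / √(L + S t)`, and
`L + S t ≥ S (t + 1)` because `h (t + 1) ≤ L`. Each summand is therefore at most
`2 c1 √L (√(S (t + 1)) - √(S t))` (`penalty_step`), and the sum telescopes to at most
`2 c1 √L (√(S (T + 1)) - √(h 1))`. As `h (T + 1) ≤ h 1`, subadditivity of the square root gives
`√(S (T + 1)) ≤ √(S T) + √(h 1)`. -/

/-- One telescoping step, with `a` the current partial sum and `x` the next entry. -/
lemma penalty_step (L c a x : ℝ) (hL : 0 < L) (hc : 0 < c) (ha : 0 ≤ a) (hx : 0 ≤ x)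
    (hxL : x ≤ L) :
    c / Real.sqrt (1 + (1 / L) * a) * x ≤
      2 * c * Real.sqrt L * (Real.sqrt (a + x) - Real.sqrt a) := by
  have hpos : 0 < 1 + (1 / L) * a := by positivity
  have hw : 0 < Real.sqrt (1 + (1 / L) * a) := Real.sqrt_pos.mpr hpos
  have hwl : Real.sqrt (a + x) ≤ Real.sqrt L * Real.sqrt (1 + (1 / L) * a) := by
    rw [← Real.sqrt_mul hL.le]
    apply Real.sqrt_le_sqrt
    have : L * (1 + (1 / L) * a) = L + a := by field_simp
    linarith
  have huv : Real.sqrt a ≤ Real.sqrt (a + x) := Real.sqrt_le_sqrt (by linarith)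
  have hu := Real.sq_sqrt (add_nonneg ha hx)
  have hv := Real.sq_sqrt ha
  rw [div_mul_eq_mul_div, div_le_iff₀ hw]
  set u := Real.sqrt (a + x)
  set v := Real.sqrt a
  set w := Real.sqrt (1 + (1 / L) * a)
  set l := Real.sqrt L
  have key : x ≤ 2 * (l * w) * (u - v) := by
    calc x = (u + v) * (u - v) := by linarith [mul_self_sub_mul_self u v]
      _ ≤ 2 * (l * w) * (u - v) :=
        mul_le_mul_of_nonneg_right (by linarith) (by linarith)
  calc c * x ≤ c * (2 * (l * w) * (u - v)) := mul_le_mul_of_nonneg_left key hc.le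
    _ = 2 * c * l * (u - v) * w := by ring

/-- Penalty-term bound (penalty_etadiffsum_bound): with 0 ≤ h_t ≤ L,
h_{T+1} ≤ h_1 and δ_t = c₁ / √(1 + (1/L) ∑_{s=1}^t h_s),
∑_{t=1}^T δ_t h_{t+1} ≤ 2 c₁ √L √(∑_{t=1}^T h_t). -/
theorem stmt_11 (T : ℕ) (hT : 0 < T) (L c1 : ℝ) (hL : 0 < L) (hc1 : 0 < c1)
    (h : ℕ → ℝ) (hbound : ∀ t ∈ Finset.Icc 1 (T + 1), 0 ≤ h t ∧ h t ≤ L)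
    (hlast : h (T + 1) ≤ h 1) :
    ∑ t ∈ Finset.Icc 1 T,
        (c1 / Real.sqrt (1 + (1 / L) * ∑ s ∈ Finset.Icc 1 t, h s)) * h (t + 1) ≤
      2 * c1 * Real.sqrt L * Real.sqrt (∑ t ∈ Finset.Icc 1 T, h t) := by
  have hS : ∀ n ≤ T + 1, 0 ≤ ∑ s ∈ Finset.Icc 1 n, h s := fun n hn =>
    Finset.sum_nonneg fun s hs =>
      (hbound s (Finset.Icc_subset_Icc_right hn hs)).1
  have tele : ∀ n ≤ T, ∑ t ∈ Finset.Icc 1 n,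
        (c1 / Real.sqrt (1 + (1 / L) * ∑ s ∈ Finset.Icc 1 t, h s)) * h (t + 1) ≤
      2 * c1 * Real.sqrt L *
        (Real.sqrt (∑ s ∈ Finset.Icc 1 (n + 1), h s) - Real.sqrt (h 1)) := by
    intro n
    induction n with
    | zero => simp
    | succ n ih =>
      intro hn
      have hb := hbound (n + 1 + 1) (Finset.mem_Icc.mpr ⟨by omega, by omega⟩)
      have hstep := penalty_step L c1 _ _ hL hc1 (hS (n + 1) (by omega)) hb.1 hb.2
      rw [Finset.sum_Icc_succ_top (by omega : 1 ≤ n + 1),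
        Finset.sum_Icc_succ_top (by omega : 1 ≤ n + 1 + 1)]
      linarith [ih (by omega)]
  have h1 := (hbound 1 (Finset.mem_Icc.mpr ⟨le_rfl, by omega⟩)).1
  have hsub : Real.sqrt (∑ s ∈ Finset.Icc 1 (T + 1), h s) ≤
      Real.sqrt (∑ s ∈ Finset.Icc 1 T, h s) + Real.sqrt (h 1) := by
    rw [Finset.sum_Icc_succ_top (by omega : 1 ≤ T + 1)]
    have hST := hS T (by omega)
    apply Real.sqrt_le_iff.mpr
    refine ⟨by positivity, ?_⟩
    nlinarith [Real.sq_sqrt hST, Real.sq_sqrt h1,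
      mul_nonneg (Real.sqrt_nonneg (∑ s ∈ Finset.Icc 1 T, h s)) (Real.sqrt_nonneg (h 1))]
  refine (tele T le_rfl).trans (mul_le_mul_of_nonneg_left (by linarith) (by positivity))
end

section
/- Let T be a positive integer, L > 0, c₁ > 0, and let h_1, …, h_T be reals with 0 ≤ h_t ≤ L for all t. Define β'_1 = c₁ and β'_{t+1} = β'_t + c₁ / sqrt( 1 + (1/L) ∑_{s=1}^{t} h_s ). Then for every t ∈ {1,…,T}: β'_t ≥ c₁ · t / sqrt( 1 + (1/L) ∑_{s=1}^{t} h_s ), and consequently ∑_{t=1}^T 1/β'_t ≤ ((1 + log T)/c₁) · sqrt( 1 + (1/L) ∑_{t=1}^{T} h_t ). -/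
/-!
Write `S t = √(1 + (1/L) ∑_{s ≤ t} h s)`. Since the `h s` are nonnegative, `1 ≤ S t` and `S` is
monotone on `{1, …, T}`. By induction `β (t+1) = β t + c1 / S t ≥ c1 (t+1) / S t ≥ c1 (t+1) / S (t+1)`,
which is the lower bound. It gives `1 / β t ≤ (S T / c1) / t`, and the harmonic sum is at most
`1 + log T`.
-/

/-- Learning-rate lower bound and harmonic-sum bound (sum_eta_bound): with
0 ≤ h_t ≤ L, β'_1 = c₁ and β'_{t+1} = β'_t + c₁ / √(1 + (1/L) ∑_{s=1}^t h_s),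
we have β'_t ≥ c₁ t / √(1 + (1/L) ∑_{s=1}^t h_s) for all t ∈ [T], and
∑_{t=1}^T 1/β'_t ≤ ((1 + log T)/c₁) √(1 + (1/L) ∑_{t=1}^T h_t). -/
theorem stmt_12 (T : ℕ) (hT : 0 < T) (L c1 : ℝ) (hL : 0 < L) (hc1 : 0 < c1)
    (h : ℕ → ℝ) (hbound : ∀ t ∈ Finset.Icc 1 T, 0 ≤ h t ∧ h t ≤ L)
    (β : ℕ → ℝ) (hβ1 : β 1 = c1)
    (hβ : ∀ t, 1 ≤ t →
      β (t + 1) = β t + c1 / Real.sqrt (1 + (1 / L) * ∑ s ∈ Finset.Icc 1 t, h s)) :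
    (∀ t ∈ Finset.Icc 1 T,
        c1 * t / Real.sqrt (1 + (1 / L) * ∑ s ∈ Finset.Icc 1 t, h s) ≤ β t) ∧
      ∑ t ∈ Finset.Icc 1 T, 1 / β t ≤
        ((1 + Real.log T) / c1) *
          Real.sqrt (1 + (1 / L) * ∑ t ∈ Finset.Icc 1 T, h t) := by
  set S : ℕ → ℝ := fun t => Real.sqrt (1 + (1 / L) * ∑ s ∈ Finset.Icc 1 t, h s) with hS
  have hLi : 0 ≤ 1 / L := by positivity
  have hmono : ∀ a b, a ≤ b → b ≤ T → S a ≤ S b := by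
    intro a b hab hbT
    apply Real.sqrt_le_sqrt
    have : ∑ s ∈ Finset.Icc 1 a, h s ≤ ∑ s ∈ Finset.Icc 1 b, h s := by
      apply Finset.sum_le_sum_of_subset_of_nonneg (Finset.Icc_subset_Icc_right hab)
      intro i hi _
      rw [Finset.mem_Icc] at hi
      exact (hbound i (Finset.mem_Icc.2 ⟨hi.1, hi.2.trans hbT⟩)).1
    gcongr
  have hone : ∀ t, t ≤ T → 1 ≤ S t := by
    intro t ht
    have h0 : S 0 = 1 := by simp [hS]
    exact h0 ▸ hmono 0 t (Nat.zero_le t) ht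
  have key : ∀ t, 1 ≤ t → t ≤ T → c1 * t / S t ≤ β t := by
    intro t ht
    induction t, ht using Nat.le_induction with
    | base =>
      intro h1
      rw [hβ1, Nat.cast_one, mul_one]
      exact div_le_self hc1.le (hone 1 h1)
    | succ n hn ih =>
      intro hnT
      have hn' : n ≤ T := by omega
      have hpos : 0 < S n := one_pos.trans_le (hone n hn')
      calc c1 * ((n + 1 : ℕ) : ℝ) / S (n + 1) ≤ c1 * ((n + 1 : ℕ) : ℝ) / S n :=
            div_le_div_of_nonneg_left (by positivity) hpos (hmono n (n + 1) (by omega) hnT)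
        _ = c1 * n / S n + c1 / S n := by push_cast; ring
        _ ≤ β n + c1 / S n := by gcongr; exact ih hn'
        _ = β (n + 1) := (hβ n hn).symm
  refine ⟨fun t ht => key t (Finset.mem_Icc.1 ht).1 (Finset.mem_Icc.1 ht).2, ?_⟩
  have hST : 0 < S T := one_pos.trans_le (hone T le_rfl)
  have hharm : ∑ t ∈ Finset.Icc 1 T, ((t : ℝ))⁻¹ ≤ 1 + Real.log T := by
    have := harmonic_le_one_add_log T
    rw [harmonic_eq_sum_Icc] at this
    push_cast at this
    exact this
  calc ∑ t ∈ Finset.Icc 1 T, 1 / β t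
      ≤ ∑ t ∈ Finset.Icc 1 T, (S T / c1) * ((t : ℝ))⁻¹ := by
        apply Finset.sum_le_sum
        intro t ht
        obtain ⟨h1, h2⟩ := Finset.mem_Icc.1 ht
        have htpos : (0 : ℝ) < t := by exact_mod_cast h1
        have hpos : 0 < S t := one_pos.trans_le (hone t h2)
        calc 1 / β t ≤ 1 / (c1 * t / S t) :=
              one_div_le_one_div_of_le (by positivity) (key t h1 h2)
          _ = (S t / c1) * ((t : ℝ))⁻¹ := by field_simp
          _ ≤ (S T / c1) * ((t : ℝ))⁻¹ := by
              have := hmono t T h2 le_rfl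
              gcongr
    _ = (S T / c1) * ∑ t ∈ Finset.Icc 1 T, ((t : ℝ))⁻¹ := by rw [Finset.mul_sum]
    _ ≤ (S T / c1) * (1 + Real.log T) := by gcongr
    _ = ((1 + Real.log T) / c1) * S T := by ring
end

section
/- Let T be a positive integer, c₁ > 0, and let z_1, …, z_T be nonnegative reals with partial sums Z_t = ∑_{s=1}^t z_s (and Z_0 = 0), satisfying z_t ≤ 8 (c₁ + Z_{t−1}) for all t ∈ {1,…,T}. Then ∑_{t=1}^T z_t / sqrt( c₁ + Z_{t−1} ) ≤ 5 · sqrt( Z_T ). -/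
/-!
With `Y_t = √(c₁ + Z_t)`, each summand factors as
`z_t / Y_{t-1} = (Y_t - Y_{t-1}) (Y_t / Y_{t-1} + 1)`. The growth condition says exactly that
`Y_t ≤ 3 Y_{t-1}`, so the summand is at most `4 (Y_t - Y_{t-1})` (`div_sqrt_le_step`). The bounds
telescope to `4 (√(c₁ + Z_T) - √c₁)`, which is at most `4 √Z_T` by subadditivity of the square
root; the constant `5` leaves some slack.
-/

lemma div_sqrt_le_step {S x : ℝ} (hS : 0 < S) (hx : 0 ≤ x) (hxS : x ≤ 8 * S) :
    x / Real.sqrt S ≤ 4 * (Real.sqrt (S + x) - Real.sqrt S) := by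
  have ha : 0 < Real.sqrt S := Real.sqrt_pos.mpr hS
  have ha2 : Real.sqrt S ^ 2 = S := Real.sq_sqrt hS.le
  have hb2 : Real.sqrt (S + x) ^ 2 = S + x := Real.sq_sqrt (by linarith)
  have hab : Real.sqrt S ≤ Real.sqrt (S + x) := Real.sqrt_le_sqrt (by linarith)
  have hb3 : Real.sqrt (S + x) ≤ 3 * Real.sqrt S := by
    apply Real.sqrt_le_iff.mpr
    constructor
    · positivity
    · nlinarith
  rw [div_le_iff₀ ha]
  nlinarith [mul_nonneg (sub_nonneg.mpr hab) (sub_nonneg.mpr hb3)]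

/-- Telescoping bound (BB1): if z_t ≥ 0 and z_t ≤ 8(c₁ + Z_{t−1}) where
Z_t = ∑_{s=1}^t z_s, then ∑_{t=1}^T z_t / √(c₁ + Z_{t−1}) ≤ 5 √(Z_T). -/
theorem stmt_14 (T : ℕ) (hT : 0 < T) (c1 : ℝ) (hc1 : 0 < c1)
    (z : ℕ → ℝ) (hz : ∀ t ∈ Finset.Icc 1 T, 0 ≤ z t)
    (hgrow : ∀ t ∈ Finset.Icc 1 T, z t ≤ 8 * (c1 + ∑ s ∈ Finset.Ico 1 t, z s)) :
    ∑ t ∈ Finset.Icc 1 T, z t / Real.sqrt (c1 + ∑ s ∈ Finset.Ico 1 t, z s) ≤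
      5 * Real.sqrt (∑ s ∈ Finset.Icc 1 T, z s) := by
  have hIco : ∀ n : ℕ, Finset.Ico 1 (n + 1) = Finset.Icc 1 n := fun n => by
    ext; simp only [Finset.mem_Ico, Finset.mem_Icc]; omega
  have hZ : ∀ n ≤ T, 0 ≤ ∑ s ∈ Finset.Icc 1 n, z s := fun n hn =>
    Finset.sum_nonneg fun s hs => hz s (Finset.Icc_subset_Icc_right hn hs)
  have key : ∀ n ≤ T,
      ∑ t ∈ Finset.Icc 1 n, z t / Real.sqrt (c1 + ∑ s ∈ Finset.Ico 1 t, z s) ≤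
        4 * (Real.sqrt (c1 + ∑ s ∈ Finset.Icc 1 n, z s) - Real.sqrt c1) := by
    intro n
    induction n with
    | zero => intro _; simp
    | succ k ih =>
      intro hk
      have hmem : k + 1 ∈ Finset.Icc 1 T := Finset.mem_Icc.mpr ⟨by omega, hk⟩
      have hg := hgrow _ hmem
      rw [hIco] at hg
      have hstep := div_sqrt_le_step (add_pos_of_pos_of_nonneg hc1 (hZ k (by omega)))
        (hz _ hmem) hg
      rw [Finset.sum_Icc_succ_top (by omega), Finset.sum_Icc_succ_top (by omega), hIco,
        ← add_assoc]
      linarith [ih (by omega)]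
  have hsub : Real.sqrt (c1 + ∑ s ∈ Finset.Icc 1 T, z s) ≤
      Real.sqrt c1 + Real.sqrt (∑ s ∈ Finset.Icc 1 T, z s) := by
    apply Real.sqrt_le_iff.mpr
    refine ⟨by positivity, ?_⟩
    nlinarith [Real.sq_sqrt hc1.le, Real.sq_sqrt (hZ T le_rfl),
      mul_nonneg (Real.sqrt_nonneg c1) (Real.sqrt_nonneg (∑ s ∈ Finset.Icc 1 T, z s))]
  linarith [key T le_rfl, Real.sqrt_nonneg (∑ s ∈ Finset.Icc 1 T, z s)]
end
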